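/- arXiv:2309.12791 — 3 statements merged into one kernel-verified Lean document; each statement's English description precedes it below -/
import Mathlib

section
/- Let G and Γ be groups, let π : G → G/Z(G) be the quotient by the center, let ρ : Γ → G/Z(G) be a group homomorphism (a projective representation of Γ in G), and let ρ̃ : Γ → G be any set-theoretic lift of ρ (so π ∘ ρ̃ = ρ). Define z : Γ × Γ → Z(G) by z(γ,γ') = ρ̃(γ)·ρ̃(γ')·ρ̃(γγ')⁻¹, and let Γ act on G by γ·x = ρ̃(γ) x ρ̃(γ)⁻¹ (this is a homomorphism Γ → Aut(G) because z is central), forming the semidirect product G ⋊ Γ. Then a group automorphism α of G extends to a group automorphism of G ⋊ Γ (one whose restriction to the canonical copy of G is α) if and only if there exist an automorphism θ of Γ and a function c : Γ → Z(G) such that α(z(γ,γ'))·z(θ(γ),θ(γ'))⁻¹ = c(γ)·c(γ')·c(γγ')⁻¹ for all γ, γ' ∈ Γ (i.e., the cohomology class of α∘z in H²(Γ, Z(G)) with trivial Γ-action lies in the orbit of the class of z under Aut(Γ)). -/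
theorem core_iff {G : Type} [Group G] (A A' A'' R R' R'' c c' c'' Z W : G)
    (hc : c ∈ Subgroup.center G) (hc' : c' ∈ Subgroup.center G) (hc'' : c'' ∈ Subgroup.center G)
    (hZ : Z ∈ Subgroup.center G) (hW : W ∈ Subgroup.center G)
    (eZ : Z = A * A' * A''⁻¹) (eW : W = R * R' * R''⁻¹) :
    A'' * c''⁻¹ * R''⁻¹ = A * c⁻¹ * R⁻¹ * (R * (A' * c'⁻¹ * R'⁻¹) * R⁻¹) ↔
      Z * W⁻¹ = c * c' * c''⁻¹ := by
  have eA : A * A' = Z * A'' := by rw [eZ]; group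
  have eR : R * R' = W * R'' := by rw [eW]; group
  have ci := Subgroup.mem_center_iff.1 (inv_mem hc)
  have ci' := Subgroup.mem_center_iff.1 (inv_mem hc')
  have ci'' := Subgroup.mem_center_iff.1 (inv_mem hc'')
  have cW := Subgroup.mem_center_iff.1 (inv_mem hW)
  have h1 : A * c⁻¹ * R⁻¹ * (R * (A' * c'⁻¹ * R'⁻¹) * R⁻¹)
      = c⁻¹ * c'⁻¹ * (Z * W⁻¹) * (A'' * R''⁻¹) := by
    calc _ = (A * c⁻¹) * (A' * c'⁻¹) * (R * R')⁻¹ := by group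
      _ = c⁻¹ * ((A * A') * c'⁻¹) * (W * R'')⁻¹ := by rw [ci A, eR]; group
      _ = c⁻¹ * c'⁻¹ * Z * ((A'' * R''⁻¹) * W⁻¹) := by rw [ci' (A * A'), eA]; group
      _ = _ := by rw [cW]; group
  have h2 : A'' * c''⁻¹ * R''⁻¹ = c''⁻¹ * (A'' * R''⁻¹) := by rw [ci'']; group
  have h3 : c⁻¹ * c'⁻¹ = (c * c')⁻¹ := by rw [mul_inv_rev, ci]
  rw [h1, h2, mul_left_inj, h3, eq_inv_mul_iff_mul_eq]
  exact eq_comm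


/-- Let `ρ : Γ → G/Z(G)` be a projective representation with set-theoretic lift
`ρ̃`, associated `Z(G)`-valued 2-cocycle `z(γ,γ') = ρ̃ γ * ρ̃ γ' * (ρ̃ (γγ'))⁻¹`, and let `Γ` act
on `G` by conjugation by `ρ̃`, forming `G ⋊ Γ`. A group automorphism `α` of `G` extends to an
automorphism of `G ⋊ Γ` restricting to `α` on the canonical copy of `G` if and only if there
are `θ ∈ Aut(Γ)` and `c : Γ → Z(G)` with
`α (z γ γ') * (z (θ γ) (θ γ'))⁻¹ = c γ * c γ' * (c (γγ'))⁻¹` for all `γ, γ'`. -/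
theorem automorphism_lifts_to_semidirect_iff_cocycle_in_aut_orbit
    {G Γ : Type} [Group G] [Group Γ]
    (ρ : Γ →* G ⧸ Subgroup.center G) (ρt : Γ → G)
    (hlift : ∀ γ, ((ρt γ : G ⧸ Subgroup.center G)) = ρ γ)
    (z : Γ → Γ → G)
    (hz : ∀ γ γ', z γ γ' = ρt γ * ρt γ' * (ρt (γ * γ'))⁻¹)
    (hz_central : ∀ γ γ', z γ γ' ∈ Subgroup.center G)
    (act : Γ →* MulAut G)
    (hact : ∀ γ x, act γ x = ρt γ * x * (ρt γ)⁻¹)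
    (α : G ≃* G) :
    (∃ α' : (G ⋊[act] Γ) ≃* (G ⋊[act] Γ),
        ∀ x : G, α' (SemidirectProduct.inl x) = SemidirectProduct.inl (α x)) ↔
    (∃ (θ : Γ ≃* Γ) (c : Γ → G), (∀ γ, c γ ∈ Subgroup.center G) ∧
        ∀ γ γ', α (z γ γ') * (z (θ γ) (θ γ'))⁻¹ = c γ * c γ' * (c (γ * γ'))⁻¹) := by
  have hαc : ∀ x ∈ Subgroup.center G, α x ∈ Subgroup.center G := by
    intro x hx
    rw [Subgroup.mem_center_iff] at hx ⊢
    intro g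
    obtain ⟨g, rfl⟩ := α.surjective g
    rw [← map_mul, hx, map_mul]
  have core : ∀ (θ : Γ ≃* Γ) (c : Γ → G), (∀ γ, c γ ∈ Subgroup.center G) → ∀ γ γ',
      (α (ρt (γ * γ')) * (c (γ * γ'))⁻¹ * (ρt (θ (γ * γ')))⁻¹ =
        α (ρt γ) * (c γ)⁻¹ * (ρt (θ γ))⁻¹ *
          (act (θ γ) (α (ρt γ') * (c γ')⁻¹ * (ρt (θ γ'))⁻¹)) ↔
      α (z γ γ') * (z (θ γ) (θ γ'))⁻¹ = c γ * c γ' * (c (γ * γ'))⁻¹) := by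
    intro θ c hc γ γ'
    rw [hact]
    apply core_iff _ _ _ _ _ _ _ _ _ _ _ (hc _) (hc _) (hc _) (hαc _ (hz_central _ _))
      (hz_central _ _)
    · rw [hz]; simp
    · rw [hz]; simp
  constructor
  · rintro ⟨α', hα'⟩
    have hr : ∀ p, (α' p).right = (α' (SemidirectProduct.inr p.right)).right := by
      intro p
      conv_lhs => rw [← SemidirectProduct.inl_left_mul_inr_right p]
      rw [map_mul, hα']
      simp
    let θ0 : Γ →* Γ := SemidirectProduct.rightHom.comp (α'.toMonoidHom.comp SemidirectProduct.inr)
    have hθ0 : ∀ γ, θ0 γ = (α' (SemidirectProduct.inr γ)).right := fun γ => rfl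
    have hbij : Function.Bijective θ0 := by
      constructor
      · rw [injective_iff_map_eq_one]
        intro γ h
        rw [hθ0] at h
        have : α' (SemidirectProduct.inr γ) =
            α' (SemidirectProduct.inl (α.symm (α' (SemidirectProduct.inr γ)).left)) := by
          rw [hα']
          ext
          · simp
          · simpa using h
        simpa using congrArg SemidirectProduct.right (α'.injective this)
      · intro δ
        obtain ⟨p, hp⟩ := α'.surjective (SemidirectProduct.inr δ)
        refine ⟨p.right, ?_⟩
        rw [hθ0, ← hr, hp]; simp
    let θ : Γ ≃* Γ := MulEquiv.ofBijective θ0 hbij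
    have hθ : ∀ γ, (α' (SemidirectProduct.inr γ)).right = θ γ := fun γ => rfl
    let b : Γ → G := fun γ => (α' (SemidirectProduct.inr γ)).left
    have hb : ∀ γ γ', b (γ * γ') = b γ * act (θ γ) (b γ') := by
      intro γ γ'
      simp only [b, map_mul, SemidirectProduct.mul_left, hθ]
    have hconj : ∀ γ x, α (ρt γ * x * (ρt γ)⁻¹) * b γ = b γ * (ρt (θ γ) * α x * (ρt (θ γ))⁻¹) := by
      intro γ x
      have h : (SemidirectProduct.inl (act γ x) : G ⋊[act] Γ) * SemidirectProduct.inr γ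
          = SemidirectProduct.inr γ * SemidirectProduct.inl x := by
        rw [SemidirectProduct.inl_aut]; simp
      have h2 := congrArg (fun p => (α' p).left) h
      simp only [map_mul, hα', SemidirectProduct.mul_left, hθ] at h2
      simpa [hact, b] using h2
    let c : Γ → G := fun γ => (ρt (θ γ))⁻¹ * (b γ)⁻¹ * α (ρt γ)
    have hc : ∀ γ, c γ ∈ Subgroup.center G := by
      intro γ
      rw [Subgroup.mem_center_iff]
      intro g
      obtain ⟨x, rfl⟩ := α.surjective g
      have h := hconj γ x
      simp only [map_mul, map_inv] at h
      have h' : α (ρt γ) * α x = b γ * (ρt (θ γ) * α x * (ρt (θ γ))⁻¹) * (b γ)⁻¹ * α (ρt γ) := by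
        rw [← h]; group
      simp only [c]
      rw [mul_assoc _ (α (ρt γ)), h']; group
    refine ⟨θ, c, hc, fun γ γ' => (core θ c hc γ γ').1 ?_⟩
    have hbc : ∀ γ, α (ρt γ) * (c γ)⁻¹ * (ρt (θ γ))⁻¹ = b γ := by
      intro γ; simp only [c]; group
    rw [hbc, hbc, hbc, hb]
  · rintro ⟨θ, c, hc, h⟩
    obtain ⟨b, hbdef⟩ : ∃ b : Γ → G, ∀ γ, b γ = α (ρt γ) * (c γ)⁻¹ * (ρt (θ γ))⁻¹ :=
      ⟨_, fun _ => rfl⟩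
    have hb : ∀ γ γ', b (γ * γ') = b γ * act (θ γ) (b γ') := by
      intro γ γ'
      rw [hbdef, hbdef, hbdef]
      exact (core θ c hc γ γ').2 (h γ γ')
    have hb1 : b 1 = 1 := by simpa using hb 1 1
    have hconj : ∀ γ x, α (act γ x) * b γ = b γ * act (θ γ) (α x) := by
      intro γ x
      have ci := Subgroup.mem_center_iff.1 (inv_mem (hc γ))
      rw [hact, hact, hbdef]
      simp only [map_mul, map_inv]
      calc _ = α (ρt γ) * (α x * (c γ)⁻¹) * (ρt (θ γ))⁻¹ := by group
        _ = _ := by rw [ci]; group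
    let f : (G ⋊[act] Γ) →* (G ⋊[act] Γ) :=
      MonoidHom.mk' (fun p => ⟨α p.left * b p.right, θ p.right⟩) (by
        intro p q
        ext
        · simp only [SemidirectProduct.mul_left, SemidirectProduct.mul_right, map_mul, hb]
          calc _ = α p.left * (α (act p.right q.left) * b p.right) * act (θ p.right) (b q.right) := by
                group
            _ = _ := by rw [hconj]; group
        · simp)
    have hf : Function.Bijective f := by
      constructor
      · intro p q hpq
        have h1 : α p.left * b p.right = α q.left * b q.right :=
          congrArg SemidirectProduct.left hpq
        have h2 : θ p.right = θ q.right := congrArg SemidirectProduct.right hpq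
        have h3 := θ.injective h2
        rw [h3] at h1
        exact SemidirectProduct.ext (α.injective (mul_right_cancel h1)) h3
      · intro q
        refine ⟨⟨α.symm (q.left * (b (θ.symm q.right))⁻¹), θ.symm q.right⟩, ?_⟩
        apply SemidirectProduct.ext
        · change α (α.symm (q.left * (b (θ.symm q.right))⁻¹)) * b (θ.symm q.right) = q.left
          rw [MulEquiv.apply_symm_apply]; group
        · exact θ.apply_symm_apply _
    refine ⟨MulEquiv.ofBijective f hf, fun x => ?_⟩
    apply SemidirectProduct.ext
    · change α x * b 1 = α x
      rw [hb1, mul_one]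
    · exact map_one θ
end

section
/- Let Γ be a finite group, ρ : Γ → U(n)/Z(U(n)) a projective unitary representation, ρ̃ : Γ → U(n) a set-theoretic lift of ρ, and z : Γ × Γ → Z(U(n)) the associated 2-cocycle z(γ,γ') = ρ̃(γ)ρ̃(γ')ρ̃(γγ')⁻¹. Form the semidirect product U(n) ⋊ Γ via the conjugation action γ·x = ρ̃(γ)xρ̃(γ)⁻¹, topologized with Γ discrete. Then the following are equivalent: (a) every topological-group automorphism of U(n) extends to a topological-group automorphism of U(n) ⋊ Γ restricting to it on U(n); (b) the complex-conjugation automorphism of U(n) (entrywise complex conjugation of matrices) extends to a topological-group automorphism of U(n) ⋊ Γ; (c) there exist an automorphism θ of Γ and a function c : Γ → Z(U(n)) such that z(γ,γ')⁻¹ · z(θ(γ),θ(γ'))⁻¹ = c(γ)·c(γ')·c(γγ')⁻¹ for all γ,γ' ∈ Γ (i.e., the class of z⁻¹ in H²(Γ, Z(U(n))) lies in the Aut(Γ)-orbit of the class of z). -/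
open Topology

/-- The semidirect product of topological groups, topologized via the canonical bijection with
the product `N × Γ`. -/
instance semidirectProductTopology {N Γ : Type*} [Group N] [Group Γ]
    [TopologicalSpace N] [TopologicalSpace Γ] {φ : Γ →* MulAut N} :
    TopologicalSpace (N ⋊[φ] Γ) :=
  TopologicalSpace.induced (fun x => (x.left, x.right)) inferInstance


theorem usl_circle_id (f : Circle →* Circle) (hf : Continuous f) (hi : Function.Injective f)
    (h : f (Circle.exp (Real.pi / 2)) = Circle.exp (Real.pi / 2)) : ∀ w, f w = w := by
  have hpi := Real.pi_pos
  have hre : ∀ t : ℝ, 0 ≤ t → t < Real.pi / 2 → 0 < ((f (Circle.exp t) : Circle) : ℂ).re := by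
    intro t ht0 ht
    by_contra hneg
    push Not at hneg
    have hcont : Continuous fun s : ℝ => ((f (Circle.exp s) : Circle) : ℂ).re := by fun_prop
    have h0 : ((f (Circle.exp 0) : Circle) : ℂ).re = 1 := by simp
    obtain ⟨s, hs, hs0⟩ := intermediate_value_Icc' ht0 hcont.continuousOn
      (show (0 : ℝ) ∈ Set.Icc _ _ from ⟨hneg, by simp⟩)
    have hsq : f (Circle.exp s) ^ 2 = Circle.exp Real.pi := by
      apply Subtype.ext
      have hn : Complex.normSq (f (Circle.exp s) : ℂ) = 1 := Circle.normSq_coe _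
      rw [Complex.normSq_apply] at hn
      simp only at hs0
      rw [hs0] at hn
      change ((f (Circle.exp s) ^ 2 : Circle) : ℂ) = _
      rw [Circle.coe_pow, Circle.coe_exp, Complex.exp_pi_mul_I]
      apply Complex.ext
      · simp [pow_two, hs0]; linarith
      · simp [pow_two, hs0]
    have hpi2 : f (Circle.exp Real.pi) = Circle.exp Real.pi := by
      have : Circle.exp Real.pi = Circle.exp (Real.pi/2) * Circle.exp (Real.pi/2) := by
        rw [← Circle.exp_add]; congr 1; ring
      rw [this, map_mul, h]
    have h2 : Circle.exp (s + s) = Circle.exp Real.pi := by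
      apply hi
      rw [hpi2, ← hsq, Circle.exp_add, map_mul, pow_two]
    have h3 := Circle.exp_injOn_Ioc (a := -Real.pi) (b := Real.pi) (by linarith)
      ⟨by linarith [hs.1], by linarith [hs.2]⟩ ⟨by linarith, le_refl _⟩ h2
    linarith [hs.2]
  have hk : ∀ k : ℕ, f (Circle.exp (Real.pi / 2 / 2 ^ k)) = Circle.exp (Real.pi / 2 / 2 ^ k) := by
    intro k
    induction k with
    | zero => simpa using h
    | succ k ih =>
      set t : ℝ := Real.pi / 2 / 2 ^ (k+1) with htdef
      have htt : t + t = Real.pi / 2 / 2 ^ k := by rw [htdef]; field_simp; ring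
      have ht0 : 0 < t := by positivity
      have ht1 : t < Real.pi / 2 := by
        have : Real.pi / 2 / 2 ^ k ≤ Real.pi / 2 :=
          div_le_self (by positivity) (one_le_pow₀ (by norm_num))
        linarith
      rw [← htt, Circle.exp_add, map_mul] at ih
      have h1 := hre t ht0.le ht1
      have h2 : 0 < ((Circle.exp t : Circle) : ℂ).re := by
        rw [Circle.coe_exp, Complex.exp_ofReal_mul_I_re]
        exact Real.cos_pos_of_mem_Ioo ⟨by linarith, ht1⟩
      have ih' := congrArg (fun w : Circle => (w : ℂ)) ih
      simp only [Circle.coe_mul] at ih'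
      rcases mul_self_eq_mul_self_iff.mp ih' with h | h
      · exact Subtype.ext h
      · rw [h, Complex.neg_re] at h1; linarith
  let S : AddSubgroup ℝ :=
    { carrier := {t | f (Circle.exp t) = Circle.exp t}
      zero_mem' := by simp
      add_mem' := by
        intro a b ha hb
        simp only [Set.mem_ofPred_eq] at *
        rw [Circle.exp_add, map_mul, ha, hb]
      neg_mem' := by
        intro a ha
        simp only [Set.mem_ofPred_eq] at *
        rw [Circle.exp_neg, map_inv, ha] }
  have hd : Dense (S : Set ℝ) := by
    apply AddSubgroup.dense_of_not_isolated_zero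
    intro ε hε
    obtain ⟨k, hk'⟩ := pow_unbounded_of_one_lt (Real.pi / 2 / ε) (one_lt_two)
    refine ⟨Real.pi / 2 / 2 ^ k, hk k, by positivity, ?_⟩
    rw [div_lt_iff₀ hε] at hk'
    rw [div_lt_iff₀ (by positivity)]
    linarith
  have hcl : IsClosed (S : Set ℝ) :=
    isClosed_eq (f := fun t => f (Circle.exp t)) (g := fun t => Circle.exp t) (by fun_prop)
      (by fun_prop)
  intro w
  obtain ⟨t, rfl⟩ := Circle.exp_surjective w
  have : t ∈ (S : Set ℝ) := by
    rw [← hcl.closure_eq, hd.closure_eq]; trivial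
  exact this

theorem usl_circle (f : Circle →* Circle) (hf : Continuous f) (hi : Function.Injective f) :
    (∀ w, f w = w) ∨ (∀ w, f w = w⁻¹) := by
  have hpi := Real.pi_pos
  set i := Circle.exp (Real.pi / 2) with hidef
  have hii : i * i = Circle.exp Real.pi := by rw [hidef, ← Circle.exp_add]; congr 1; ring
  have hm1 : ((Circle.exp Real.pi : Circle) : ℂ) = -1 := by
    rw [Circle.coe_exp, Complex.exp_pi_mul_I]
  have hI : (i : ℂ) = Complex.I := by
    rw [hidef, Circle.coe_exp]
    push_cast
    rw [Complex.exp_pi_div_two_mul_I]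
  have hne : Circle.exp Real.pi ≠ 1 := by
    intro h
    rw [h] at hm1
    norm_num at hm1
  have h1 : f (Circle.exp Real.pi) = Circle.exp Real.pi := by
    have hs : f (Circle.exp Real.pi) * f (Circle.exp Real.pi) = 1 := by
      rw [← map_mul, ← Circle.exp_add, ← two_mul, Circle.exp_two_pi, map_one]
    have hs' := congrArg (fun w : Circle => (w : ℂ)) hs
    simp only [Circle.coe_mul, Circle.coe_one] at hs'
    rcases mul_self_eq_one_iff.mp hs' with h | h
    · exact absurd (hi (Subtype.ext h |>.trans (map_one f).symm)) hne
    · exact Subtype.ext (h.trans hm1.symm)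
  have h2 : f i * f i = Circle.exp Real.pi := by rw [← map_mul, hii, h1]
  have h2' := congrArg (fun w : Circle => (w : ℂ)) h2
  simp only [Circle.coe_mul] at h2'
  have h3 : (f i : ℂ) * f i = i * i := by
    rw [h2', ← hii, Circle.coe_mul]
  rcases mul_self_eq_mul_self_iff.mp h3 with h | h
  · exact Or.inl (usl_circle_id f hf hi (Subtype.ext h))
  · right
    let g : Circle →* Circle := f⁻¹
    have hg : ∀ w, g w = w := by
      apply usl_circle_id g
      · exact hf.inv
      · intro a b hab
        exact hi (inv_injective hab)
      · change (f i)⁻¹ = i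
        apply Subtype.ext
        change (((f i)⁻¹ : Circle) : ℂ) = i
        rw [Circle.coe_inv, h, hI, ← Complex.inv_I, inv_inv]
    intro w
    have : (f w)⁻¹ = w := hg w
    rw [← this, inv_inv]; exact congrArg f this

theorem usl_alg {N : Type*} [Group N] (a b e A B E zb zt c c' c'' : N)
    (h1 : a * b = zb * e) (h2 : A * B = zt * E)
    (hc : ∀ g, Commute c g) (hc' : ∀ g, Commute c' g) (hc'' : ∀ g, Commute c'' g)
    (hzt : ∀ g, Commute zt g) :
    e * c''⁻¹ * E⁻¹ = a * c⁻¹ * A⁻¹ * (A * (b * c'⁻¹ * B⁻¹) * A⁻¹) ↔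
      zb * zt⁻¹ = c * c' * c''⁻¹ := by
  have L : e * c''⁻¹ * E⁻¹ = c''⁻¹ * (e * E⁻¹) := by
    rw [← ((hc'' e).inv_left).eq, mul_assoc]
  have R : a * c⁻¹ * A⁻¹ * (A * (b * c'⁻¹ * B⁻¹) * A⁻¹) = c'⁻¹ * (c⁻¹ * (zb * zt⁻¹)) * (e * E⁻¹) := by
    calc a * c⁻¹ * A⁻¹ * (A * (b * c'⁻¹ * B⁻¹) * A⁻¹) = (a * c⁻¹) * (b * c'⁻¹) * (A * B)⁻¹ := by group
      _ = (c⁻¹ * a) * (c'⁻¹ * b) * (A * B)⁻¹ := by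
        rw [((hc a).inv_left).eq, ((hc' b).inv_left).eq]
      _ = c⁻¹ * (a * c'⁻¹) * b * (A * B)⁻¹ := by group
      _ = (c⁻¹ * c'⁻¹) * (a * b) * (A * B)⁻¹ := by
        rw [← ((hc' a).inv_left).eq]; group
      _ = (c'⁻¹ * c⁻¹) * zb * (e * E⁻¹ * zt⁻¹) := by
        rw [h1, h2, ((hc' c⁻¹).inv_left).eq]; group
      _ = _ := by rw [← ((hzt (e * E⁻¹)).inv_left).eq]; group
  rw [L, R, mul_left_inj, eq_inv_mul_iff_mul_eq, eq_inv_mul_iff_mul_eq, eq_comm, mul_assoc]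

theorem usl_ext {N Γ : Type*} [Group N] [Group Γ] [TopologicalSpace N] [IsTopologicalGroup N]
    [TopologicalSpace Γ] [DiscreteTopology Γ] (ρt : Γ → N) (z : Γ → Γ → N)
    (hz : ∀ γ γ', z γ γ' = ρt γ * ρt γ' * (ρt (γ * γ'))⁻¹)
    (hzc : ∀ γ γ', z γ γ' ∈ Subgroup.center N)
    (act : Γ →* MulAut N) (hact : ∀ γ x, act γ x = ρt γ * x * (ρt γ)⁻¹)
    (β : N ≃* N) (hβ : Continuous β) (hβ' : Continuous β.symm)
    (θ : Γ ≃* Γ) (c : Γ → N) (hc : ∀ γ, c γ ∈ Subgroup.center N)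
    (h : ∀ γ γ', β (z γ γ') * (z (θ γ) (θ γ'))⁻¹ = c γ * c γ' * (c (γ * γ'))⁻¹) :
    ∃ ψ : (N ⋊[act] Γ) ≃* (N ⋊[act] Γ), Continuous ψ ∧ Continuous ψ.symm ∧
      ∀ x, ψ (SemidirectProduct.inl x) = SemidirectProduct.inl (β x) := by
  have cc : ∀ {y : N}, y ∈ Subgroup.center N → ∀ g, Commute y g := fun hy g =>
    (Subgroup.mem_center_iff.mp hy g).symm
  let d : Γ → N := fun γ => β (ρt γ) * (c γ)⁻¹ * (ρt (θ γ))⁻¹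
  have hd : ∀ γ γ', d (γ * γ') = d γ * (ρt (θ γ) * d γ' * (ρt (θ γ))⁻¹) := by
    intro γ γ'
    refine (usl_alg (β (ρt γ)) (β (ρt γ')) (β (ρt (γ * γ'))) (ρt (θ γ)) (ρt (θ γ'))
      (ρt (θ (γ * γ'))) (β (z γ γ')) (z (θ γ) (θ γ')) (c γ) (c γ') (c (γ * γ')) ?_ ?_
      (cc (hc _)) (cc (hc _)) (cc (hc _)) (cc (hzc _ _))).mpr (h γ γ')
    · rw [hz, ← map_mul, ← map_mul]; congr 1; group
    · rw [hz, map_mul]; group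
  have hd1 : d 1 = 1 := by
    have := hd 1 1
    rw [mul_one, left_eq_mul] at this
    have := mul_inv_eq_one.mp this
    exact mul_eq_left.mp this
  let ψ : (N ⋊[act] Γ) ≃* (N ⋊[act] Γ) :=
    { toFun := fun p => ⟨β p.left * d p.right, θ p.right⟩
      invFun := fun q => ⟨β.symm (q.left * (d (θ.symm q.right))⁻¹), θ.symm q.right⟩
      left_inv := by
        intro p
        ext <;> simp
      right_inv := by
        intro p
        ext <;> simp
      map_mul' := by
        intro p q
        ext
        · simp only [SemidirectProduct.mul_left, SemidirectProduct.mul_right, hact, hd, map_mul,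
            map_inv]
          have : d p.right * ρt (θ p.right) = (c p.right)⁻¹ * β (ρt p.right) := by
            rw [((cc (hc p.right) (β (ρt p.right))).inv_left).eq]
            simp only [d]; group
          have e1 : β p.left * d p.right * (ρt (θ p.right) * (β q.left * d q.right) *
              (ρt (θ p.right))⁻¹) = β p.left * (d p.right * ρt (θ p.right)) *
                (β q.left * d q.right) * (ρt (θ p.right))⁻¹ := by group
          have e2 : β p.left * (β (ρt p.right) * β q.left * (β (ρt p.right))⁻¹) *
              (d p.right * (ρt (θ p.right) * d q.right * (ρt (θ p.right))⁻¹)) =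
              β p.left * β (ρt p.right) * β q.left * (β (ρt p.right))⁻¹ *
              (d p.right * ρt (θ p.right)) * d q.right * (ρt (θ p.right))⁻¹ := by group
          rw [e1, e2, this, ((cc (hc p.right) (β (ρt p.right))).inv_left).eq]
          have e3 : β p.left * (β (ρt p.right) * (c p.right)⁻¹) * (β q.left * d q.right)
            = β p.left * β (ρt p.right) * ((c p.right)⁻¹ * β q.left) * d q.right := by group
          rw [e3, ((cc (hc p.right) (β q.left)).inv_left).eq]
          group
        · simp }
  have hl : Continuous fun p : N ⋊[act] Γ => (p.left, p.right) := continuous_induced_dom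
  have hl1 : Continuous fun p : N ⋊[act] Γ => p.left := continuous_fst.comp hl
  have hl2 : Continuous fun p : N ⋊[act] Γ => p.right := continuous_snd.comp hl
  have hmk : ∀ {g : (N ⋊[act] Γ) → (N ⋊[act] Γ)}, Continuous (fun p => (g p).left) →
      Continuous (fun p => (g p).right) → Continuous g := fun h1 h2 =>
    continuous_induced_rng.mpr (h1.prodMk h2)
  refine ⟨ψ, ?_, ?_, ?_⟩
  · apply hmk
    · exact (hβ.comp hl1).mul ((continuous_of_discreteTopology (f := d)).comp hl2)
    · exact (continuous_of_discreteTopology (f := θ)).comp hl2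
  · apply hmk
    · exact hβ'.comp (hl1.mul
        ((continuous_of_discreteTopology (f := fun g => (d (θ.symm g))⁻¹)).comp hl2))
    · exact (continuous_of_discreteTopology (f := θ.symm)).comp hl2
  · intro x
    ext
    · simp [ψ, hd1]
    · simp [ψ]

theorem usl_of_ext {N Γ : Type*} [Group N] [Group Γ] (ρt : Γ → N) (z : Γ → Γ → N)
    (hz : ∀ γ γ', z γ γ' = ρt γ * ρt γ' * (ρt (γ * γ'))⁻¹)
    (hzc : ∀ γ γ', z γ γ' ∈ Subgroup.center N)
    (act : Γ →* MulAut N) (hact : ∀ γ x, act γ x = ρt γ * x * (ρt γ)⁻¹)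
    (β : N ≃* N) (ψ : (N ⋊[act] Γ) ≃* (N ⋊[act] Γ))
    (hψ : ∀ x, ψ (SemidirectProduct.inl x) = SemidirectProduct.inl (β x)) :
    ∃ (θ : Γ ≃* Γ) (c : Γ → N), (∀ γ, c γ ∈ Subgroup.center N) ∧
      ∀ γ γ', β (z γ γ') * (z (θ γ) (θ γ'))⁻¹ = c γ * c γ' * (c (γ * γ'))⁻¹ := by
  have cc : ∀ {y : N}, y ∈ Subgroup.center N → ∀ g, Commute y g := fun hy g =>
    (Subgroup.mem_center_iff.mp hy g).symm
  let θ₀ : Γ →* Γ := SemidirectProduct.rightHom.comp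
    (ψ.toMonoidHom.comp (SemidirectProduct.inr))
  have hθ₀ : ∀ γ, θ₀ γ = (ψ (SemidirectProduct.inr γ)).right := fun γ => rfl
  have hbij : Function.Bijective θ₀ := by
    constructor
    · rw [injective_iff_map_eq_one]
      intro γ hγ
      rw [hθ₀] at hγ
      have : ψ (SemidirectProduct.inr γ) =
          ψ (SemidirectProduct.inl (β.symm (ψ (SemidirectProduct.inr γ)).left)) := by
        rw [hψ]
        ext
        · simp
        · simp [hγ]
      have := congrArg SemidirectProduct.right (ψ.injective this)
      simpa using this
    · intro δ
      obtain ⟨p, hp⟩ := ψ.surjective (SemidirectProduct.inr δ)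
      refine ⟨p.right, ?_⟩
      rw [hθ₀]
      have h1 := congrArg SemidirectProduct.right hp
      rw [← SemidirectProduct.inl_left_mul_inr_right p, map_mul, hψ] at h1
      simpa using h1
  let θ : Γ ≃* Γ := MulEquiv.ofBijective θ₀ hbij
  let d : Γ → N := fun γ => (ψ (SemidirectProduct.inr γ)).left
  have hd0 : ∀ γ, ψ (SemidirectProduct.inr γ) = ⟨d γ, θ γ⟩ := fun γ => rfl
  have hd : ∀ γ γ', d (γ * γ') = d γ * (ρt (θ γ) * d γ' * (ρt (θ γ))⁻¹) := by
    intro γ γ'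
    have := congrArg SemidirectProduct.left (map_mul ψ (SemidirectProduct.inr γ)
      (SemidirectProduct.inr γ'))
    rw [← map_mul, hd0, hd0, hd0, SemidirectProduct.mul_left, hact] at this
    exact this
  have hcomm : ∀ γ x, β (ρt γ) * β x * (β (ρt γ))⁻¹ * d γ =
      d γ * (ρt (θ γ) * β x * (ρt (θ γ))⁻¹) := by
    intro γ x
    have h1 : (SemidirectProduct.inl (act γ x) : N ⋊[act] Γ) * SemidirectProduct.inr γ =
        SemidirectProduct.inr γ * SemidirectProduct.inl x := by
      rw [SemidirectProduct.inl_aut, mul_assoc, ← map_mul, inv_mul_cancel, map_one, mul_one]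
    have h2 := congrArg (fun p => (ψ p).left) h1
    simp only [map_mul ψ, hψ, hd0, SemidirectProduct.mul_left, SemidirectProduct.left_inl,
      SemidirectProduct.right_inl, map_one, MulAut.one_apply] at h2
    simpa only [hact, map_mul, map_inv] using h2
  let c : Γ → N := fun γ => ((β (ρt γ))⁻¹ * d γ * ρt (θ γ))⁻¹
  have hc : ∀ γ, c γ ∈ Subgroup.center N := by
    intro γ
    apply Subgroup.inv_mem
    rw [Subgroup.mem_center_iff]
    intro g
    obtain ⟨x, rfl⟩ := β.surjective g
    have := hcomm γ x
    calc β x * ((β (ρt γ))⁻¹ * d γ * ρt (θ γ))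
        = (β (ρt γ))⁻¹ * (β (ρt γ) * β x * (β (ρt γ))⁻¹ * d γ) * ρt (θ γ) := by group
      _ = _ := by rw [this]; group
  have hdc : ∀ γ, d γ = β (ρt γ) * (c γ)⁻¹ * (ρt (θ γ))⁻¹ := by
    intro γ
    simp only [c]; group
  refine ⟨θ, c, hc, ?_⟩
  intro γ γ'
  refine (usl_alg (β (ρt γ)) (β (ρt γ')) (β (ρt (γ * γ'))) (ρt (θ γ)) (ρt (θ γ'))
      (ρt (θ (γ * γ'))) (β (z γ γ')) (z (θ γ) (θ γ')) (c γ) (c γ') (c (γ * γ')) ?_ ?_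
      (cc (hc _)) (cc (hc _)) (cc (hc _)) (cc (hzc _ _))).mp ?_
  · rw [hz, ← map_mul, ← map_mul]; congr 1; group
  · rw [hz, map_mul]; group
  · rw [← hdc, ← hdc, ← hdc, hd]

open scoped Matrix.Norms.L2Operator in
theorem usl_comm_all {n : ℕ} (u : Matrix.unitaryGroup (Fin n) ℂ)
    (hu : u ∈ Subgroup.center (Matrix.unitaryGroup (Fin n) ℂ)) (M : Matrix (Fin n) (Fin n) ℂ) :
    M * (u : Matrix (Fin n) (Fin n) ℂ) = u * M := by
  have hM : M ∈ Submodule.span ℂ (unitary (Matrix (Fin n) (Fin n) ℂ) : Set _) := by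
    rw [CStarAlgebra.span_unitary]; trivial
  induction hM using Submodule.span_induction with
  | mem x hx =>
    exact congrArg Subtype.val (Subgroup.mem_center_iff.mp hu ⟨x, hx⟩)
  | zero => simp
  | add x y _ _ hx hy => rw [add_mul, mul_add, hx, hy]
  | smul a x _ hx => rw [smul_mul_assoc, mul_smul_comm, hx]

/-- Scalar unitary matrices. -/
noncomputable def uslScalar (n : ℕ) : Circle →* Matrix.unitaryGroup (Fin n) ℂ where
  toFun w := ⟨(w : ℂ) • 1, by
    rw [Matrix.mem_unitaryGroup_iff]
    have h : (w : ℂ) * (starRingEnd ℂ) w = 1 := by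
      rw [Complex.mul_conj, Circle.normSq_coe]; simp
    rw [star_smul, star_one, smul_mul_smul_comm, one_mul]
    change ((w : ℂ) * (starRingEnd ℂ) w) • (1 : Matrix (Fin n) (Fin n) ℂ) = 1
    rw [h, one_smul]⟩
  map_one' := by ext; simp
  map_mul' a b := by
    apply Subtype.ext
    simp [smul_smul, mul_comm]

theorem uslScalar_coe (n : ℕ) (w : Circle) :
    (uslScalar n w : Matrix (Fin n) (Fin n) ℂ) = (w : ℂ) • 1 := rfl

theorem uslScalar_mem (n : ℕ) (w : Circle) :
    uslScalar n w ∈ Subgroup.center (Matrix.unitaryGroup (Fin n) ℂ) := by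
  rw [Subgroup.mem_center_iff]
  intro g
  apply Subtype.ext
  change (g : Matrix (Fin n) (Fin n) ℂ) * ((w : ℂ) • 1) = ((w : ℂ) • 1) * g
  simp

theorem usl_center {n : ℕ} (u : Matrix.unitaryGroup (Fin n) ℂ)
    (hu : u ∈ Subgroup.center (Matrix.unitaryGroup (Fin n) ℂ)) : ∃ w, uslScalar n w = u := by
  rcases isEmpty_or_nonempty (Fin n) with he | ⟨⟨i⟩⟩
  · exact ⟨1, Subtype.ext (Subsingleton.elim _ _)⟩
  obtain ⟨r, hr⟩ := Matrix.mem_range_scalar_of_commute_single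
    (M := (u : Matrix (Fin n) (Fin n) ℂ)) (fun a b _ => usl_comm_all u hu _)
  have h1 := Matrix.mem_unitaryGroup_iff.mp u.2
  rw [← hr] at h1
  have h2 := congrFun (congrFun h1 i) i
  have h3 : ‖r‖ = 1 := by
    have : r * (starRingEnd ℂ) r = 1 := by
      simpa [Matrix.scalar_apply, Matrix.star_eq_conjTranspose] using h2
    rw [Complex.mul_conj] at this
    have h4 : Complex.normSq r = 1 := by exact_mod_cast this
    rw [Complex.normSq_eq_norm_sq] at h4
    nlinarith [norm_nonneg r]
  refine ⟨⟨r, mem_sphere_zero_iff_norm.mpr h3⟩, ?_⟩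
  apply Subtype.ext
  change r • (1 : Matrix (Fin n) (Fin n) ℂ) = u
  rw [← hr, Matrix.scalar_apply, Matrix.smul_one_eq_diagonal]

theorem usl_center_aut {n : ℕ}
    (β : Matrix.unitaryGroup (Fin n) ℂ ≃* Matrix.unitaryGroup (Fin n) ℂ) (hβ : Continuous β) :
    (∀ u ∈ Subgroup.center (Matrix.unitaryGroup (Fin n) ℂ), β u = u) ∨
    (∀ u ∈ Subgroup.center (Matrix.unitaryGroup (Fin n) ℂ), β u = u⁻¹) := by
  rcases isEmpty_or_nonempty (Fin n) with he | ⟨⟨i⟩⟩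
  · left
    intro u _
    exact Subtype.ext (Subsingleton.elim _ _)
  have hinj : Function.Injective (uslScalar n) := by
    intro a b hab
    have h := congrFun (congrFun (congrArg Subtype.val hab) i) i
    rw [uslScalar_coe, uslScalar_coe] at h
    apply Subtype.ext
    simpa using h
  have hex : ∀ w, ∃ s, uslScalar n s = β (uslScalar n w) := by
    intro w
    apply usl_center
    rw [Subgroup.mem_center_iff]
    intro g
    obtain ⟨g, rfl⟩ := β.surjective g
    rw [← map_mul, ← map_mul, Subgroup.mem_center_iff.mp (uslScalar_mem n w)]
  choose f hf using hex
  let F : Circle →* Circle :=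
    { toFun := f
      map_one' := hinj (by rw [hf, map_one, map_one])
      map_mul' := fun a b => hinj (by rw [hf, map_mul, map_mul, map_mul, hf, hf]) }
  have hFinj : Function.Injective F := by
    intro a b hab
    apply hinj
    apply β.injective
    rw [← hf, ← hf]
    exact congrArg _ hab
  have hsc : Continuous (uslScalar n) := by
    apply Continuous.subtype_mk
    exact (show Continuous fun w : Circle => (w : ℂ) by fun_prop).smul continuous_const
  have hFc : Continuous F := by
    apply continuous_induced_rng.mpr
    have : (fun w : Circle => ((F w : Circle) : ℂ)) =
        fun w => (β (uslScalar n w) : Matrix (Fin n) (Fin n) ℂ) i i := by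
      funext w
      rw [← hf, uslScalar_coe]
      simp [F]
    change Continuous (fun w : Circle => ((F w : Circle) : ℂ))
    rw [this]
    exact (continuous_subtype_val.comp (hβ.comp hsc)).matrix_elem i i
  rcases usl_circle F hFc hFinj with h | h
  · left
    intro u hu
    obtain ⟨w, rfl⟩ := usl_center u hu
    rw [← hf]
    exact congrArg _ (h w)
  · right
    intro u hu
    obtain ⟨w, rfl⟩ := usl_center u hu
    rw [← hf, ← map_inv]
    exact congrArg _ (h w)

/-- Entrywise complex conjugation on `U(n)`. -/
noncomputable def uslConj (n : ℕ) :
    Matrix.unitaryGroup (Fin n) ℂ ≃* Matrix.unitaryGroup (Fin n) ℂ :=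
  have hm : ∀ x : Matrix.unitaryGroup (Fin n) ℂ,
      (x : Matrix (Fin n) (Fin n) ℂ).map (starRingEnd ℂ) ∈ Matrix.unitaryGroup (Fin n) ℂ := by
    intro x
    have h := Matrix.mem_unitaryGroup_iff.mp x.2
    rw [Matrix.mem_unitaryGroup_iff]
    have h2 := congrArg (fun M : Matrix (Fin n) (Fin n) ℂ => M.map (starRingEnd ℂ)) h
    simp only [Matrix.map_mul] at h2
    rw [Matrix.map_one _ (map_zero _) (map_one _)] at h2
    exact h2
  { toFun := fun x => ⟨(x : Matrix (Fin n) (Fin n) ℂ).map (starRingEnd ℂ), hm x⟩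
    invFun := fun x => ⟨(x : Matrix (Fin n) (Fin n) ℂ).map (starRingEnd ℂ), hm x⟩
    left_inv := by intro x; ext; simp
    right_inv := by intro x; ext; simp
    map_mul' := by
      intro x y
      apply Subtype.ext
      exact Matrix.map_mul }

theorem uslConj_coe {n : ℕ} (x : Matrix.unitaryGroup (Fin n) ℂ) :
    (uslConj n x : Matrix (Fin n) (Fin n) ℂ) =
      (x : Matrix (Fin n) (Fin n) ℂ).map (starRingEnd ℂ) := rfl

theorem uslConj_continuous (n : ℕ) : Continuous (uslConj n) := by
  apply Continuous.subtype_mk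
  exact continuous_subtype_val.matrix_map Complex.continuous_conj

theorem uslConj_symm_continuous (n : ℕ) : Continuous (uslConj n).symm :=
  uslConj_continuous n

theorem uslConj_center {n : ℕ} (u : Matrix.unitaryGroup (Fin n) ℂ)
    (hu : u ∈ Subgroup.center (Matrix.unitaryGroup (Fin n) ℂ)) : uslConj n u = u⁻¹ := by
  obtain ⟨w, rfl⟩ := usl_center u hu
  rw [← map_inv]
  apply Subtype.ext
  rw [uslConj_coe, uslScalar_coe, uslScalar_coe, Circle.coe_inv_eq_conj]
  ext i j
  by_cases h : i = j <;> simp [Matrix.one_apply, h]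


/-- Let `Γ` be finite, `ρ : Γ → U(n)/Z(U(n))` a projective unitary representation
with set-theoretic lift `ρ̃` and associated 2-cocycle `z`, and form `U(n) ⋊ Γ` via conjugation
by `ρ̃` (with `Γ` discrete). TFAE: (a) every topological-group automorphism of `U(n)` extends to
a topological-group automorphism of `U(n) ⋊ Γ` restricting to it on `U(n)`; (b) the
complex-conjugation automorphism of `U(n)` so extends; (c) there are `θ ∈ Aut(Γ)` and
`c : Γ → Z(U(n))` with `(z γ γ')⁻¹ * (z (θ γ) (θ γ'))⁻¹ = c γ * c γ' * (c (γγ'))⁻¹`. -/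
theorem unitary_semidirect_lifting_tfae
    {n : ℕ} {Γ : Type} [Group Γ] [Finite Γ] [TopologicalSpace Γ] [DiscreteTopology Γ]
    (ρ : Γ →* Matrix.unitaryGroup (Fin n) ℂ ⧸ Subgroup.center (Matrix.unitaryGroup (Fin n) ℂ))
    (ρt : Γ → Matrix.unitaryGroup (Fin n) ℂ)
    (hlift : ∀ γ, ((ρt γ : Matrix.unitaryGroup (Fin n) ℂ ⧸
        Subgroup.center (Matrix.unitaryGroup (Fin n) ℂ))) = ρ γ)
    (z : Γ → Γ → Matrix.unitaryGroup (Fin n) ℂ)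
    (hz : ∀ γ γ', z γ γ' = ρt γ * ρt γ' * (ρt (γ * γ'))⁻¹)
    (hz_central : ∀ γ γ', z γ γ' ∈ Subgroup.center (Matrix.unitaryGroup (Fin n) ℂ))
    (act : Γ →* MulAut (Matrix.unitaryGroup (Fin n) ℂ))
    (hact : ∀ γ x, act γ x = ρt γ * x * (ρt γ)⁻¹) :
    List.TFAE
      [ ∀ β : Matrix.unitaryGroup (Fin n) ℂ ≃* Matrix.unitaryGroup (Fin n) ℂ,
          Continuous ⇑β → Continuous ⇑β.symm →
          ∃ ψ : (Matrix.unitaryGroup (Fin n) ℂ ⋊[act] Γ) ≃*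
              (Matrix.unitaryGroup (Fin n) ℂ ⋊[act] Γ),
            Continuous ⇑ψ ∧ Continuous ⇑ψ.symm ∧
            ∀ x, ψ (SemidirectProduct.inl x) = SemidirectProduct.inl (β x),
        ∃ ψ : (Matrix.unitaryGroup (Fin n) ℂ ⋊[act] Γ) ≃*
            (Matrix.unitaryGroup (Fin n) ℂ ⋊[act] Γ),
          Continuous ⇑ψ ∧ Continuous ⇑ψ.symm ∧
          ∀ x : Matrix.unitaryGroup (Fin n) ℂ,
            (ψ (SemidirectProduct.inl x)).right = 1 ∧
            ((ψ (SemidirectProduct.inl x)).left : Matrix (Fin n) (Fin n) ℂ) =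
              (x : Matrix (Fin n) (Fin n) ℂ).map (starRingEnd ℂ),
        ∃ (θ : Γ ≃* Γ) (c : Γ → Matrix.unitaryGroup (Fin n) ℂ),
          (∀ γ, c γ ∈ Subgroup.center (Matrix.unitaryGroup (Fin n) ℂ)) ∧
          ∀ γ γ', (z γ γ')⁻¹ * (z (θ γ) (θ γ'))⁻¹ = c γ * c γ' * (c (γ * γ'))⁻¹ ] := by
  tfae_have 1 → 2 := by
    intro h
    obtain ⟨ψ, h1, h2, h3⟩ := h (uslConj n) (uslConj_continuous n) (uslConj_symm_continuous n)
    refine ⟨ψ, h1, h2, fun x => ?_⟩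
    rw [h3]
    exact ⟨rfl, rfl⟩
  tfae_have 2 → 3 := by
    rintro ⟨ψ, -, -, h⟩
    obtain ⟨θ, c, hc, h'⟩ := usl_of_ext ρt z hz hz_central act hact (uslConj n) ψ (fun x => by
      apply SemidirectProduct.ext
      · exact Subtype.ext (h x).2
      · exact (h x).1)
    refine ⟨θ, c, hc, fun γ γ' => ?_⟩
    rw [← h', uslConj_center _ (hz_central _ _)]
  tfae_have 3 → 1 := by
    rintro ⟨θ, c, hc, h⟩ β hβ hβ'
    rcases usl_center_aut β hβ with hid | hinv
    · refine usl_ext ρt z hz hz_central act hact β hβ hβ' (MulEquiv.refl Γ) (fun _ => 1)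
        (fun _ => Subgroup.one_mem _) (fun γ γ' => ?_)
      rw [hid _ (hz_central _ _)]
      simp
    · refine usl_ext ρt z hz hz_central act hact β hβ hβ' θ c hc (fun γ γ' => ?_)
      rw [hinv _ (hz_central _ _), h]
  tfae_finish
end

section
/- For every positive integer d there exist a positive integer n divisible by d, a finite group Γ, and an action of Γ on U(n) by topological-group automorphisms, such that the complex-conjugation automorphism of U(n) (entrywise complex conjugation of matrices) does not extend to a topological-group automorphism of the semidirect product U(n) ⋊ Γ; consequently no outer topological-group automorphism of U(n) extends to U(n) ⋊ Γ. -/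
open Topology

theorem aux_circle_char (f : Circle → ℂ) (hf : Continuous f) (h1 : f 1 = 1)
    (hm : ∀ z w, f (z * w) = f z * f w) : ∃ k : ℤ, ∀ z : Circle, f z = (z : ℂ) ^ k := by
  set F : ℝ → ℂ := fun x => f (Circle.exp x) with hF
  have Fc : Continuous F := hf.comp (map_continuous Circle.exp)
  have F0 : F 0 = 1 := by simp [hF, h1]
  have Fa : ∀ x y, F (x + y) = F x * F y := fun x y => by simp [hF, Circle.exp_add, hm]
  -- antiderivative
  set G : ℝ → ℂ := fun x => ∫ t in (0:ℝ)..x, F t with hG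
  have Gd : ∀ x, HasDerivAt G (F x) x := fun x =>
    intervalIntegral.integral_hasDerivAt_right (Fc.intervalIntegrable _ _)
      Fc.aestronglyMeasurable.stronglyMeasurableAtFilter Fc.continuousAt
  obtain ⟨a, ha⟩ : ∃ a, G a ≠ 0 := by
    by_contra! h
    have : G = fun _ => 0 := funext h
    have h0 := Gd 0
    rw [this, F0] at h0
    exact one_ne_zero (h0.unique (hasDerivAt_const _ _))
  have key : ∀ x, F x * G a = G (x + a) - G x := by
    intro x
    have : ∫ t in (0:ℝ)..a, F (x + t) = ∫ t in x..(x+a), F t := by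
      rw [intervalIntegral.integral_comp_add_left]; simp
    rw [hG]
    simp only
    rw [← intervalIntegral.integral_const_mul, intervalIntegral.integral_interval_sub_left
      (Fc.intervalIntegrable _ _) (Fc.intervalIntegrable _ _), ← this]
    simp [Fa]
  have Fd : ∀ x, DifferentiableAt ℝ F x := by
    intro x
    have : F = fun x => (G (x + a) - G x) / G a := by
      funext y; rw [← key, mul_div_cancel_right₀ _ ha]
    rw [this]
    have h1 : DifferentiableAt ℝ (fun x => G (x + a)) x :=
      ((Gd (x + a)).comp_add_const x a).differentiableAt
    exact (h1.sub (Gd x).differentiableAt).div_const _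
  set c := deriv F 0 with hc
  have Fd' : ∀ x, HasDerivAt F (c * F x) x := by
    intro x
    have h1 : HasDerivAt (fun y => F (y - x) * F x) (c * F x) x := by
      have : HasDerivAt F c (x - x) := by rw [sub_self]; exact (Fd 0).hasDerivAt
      exact (this.comp_sub_const x x).mul_const _
    have : (fun y => F (y - x) * F x) = F := by
      funext y; rw [← Fa]; simp
    rwa [this] at h1
  have Fe : ∀ x : ℝ, F x = Complex.exp (c * x) := by
    have hd : ∀ x : ℝ, HasDerivAt (fun x : ℝ => F x * Complex.exp (-(c * x))) 0 x := by
      intro x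
      have h2 : HasDerivAt (fun x : ℝ => Complex.exp (-(c * x))) (Complex.exp (-(c * x)) * (-c)) x := by
        have : HasDerivAt (fun x : ℝ => -(c * (x:ℂ))) (-(c * 1)) x :=
          ((Complex.ofRealCLM.hasDerivAt (x := x)).const_mul c).neg
        simpa using this.cexp
      have := (Fd' x).mul h2
      exact this.congr_deriv (by ring)
    intro x
    have := is_const_of_deriv_eq_zero (fun y => (hd y).differentiableAt) (fun y => (hd y).deriv) x 0
    simp only [F0, Complex.ofReal_zero, mul_zero, neg_zero, Complex.exp_zero, mul_one] at this
    rw [Complex.exp_neg] at this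
    field_simp [Complex.exp_ne_zero] at this
    exact this
  have h2 : Complex.exp (c * (2 * Real.pi : ℝ)) = 1 := by
    rw [← Fe]; simp [hF, h1]
  obtain ⟨k, hk⟩ := Complex.exp_eq_one_iff.1 h2
  have hck : c = k * Complex.I := by
    have : (Real.pi : ℂ) ≠ 0 := by exact_mod_cast Real.pi_ne_zero
    push_cast at hk
    have h3 : (2 * (Real.pi:ℂ)) * c = (2 * Real.pi) * (k * Complex.I) := by linear_combination hk
    exact mul_left_cancel₀ (by simp) h3
  refine ⟨k, fun z => ?_⟩
  obtain ⟨x, rfl⟩ := Circle.exp_surjective z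
  have := Fe x
  rw [hF] at this
  simp only at this
  rw [this, Circle.coe_exp, ← Complex.exp_int_mul, hck]
  congr 1; ring

theorem aux_zpow_inj (k : ℤ) (h : ∀ z : Circle, (z : ℂ) ^ k = 1 → z = 1) : k = 1 ∨ k = -1 := by
  rcases eq_or_ne k 0 with rfl | hk
  · have := h (Circle.exp Real.pi) (by simp)
    exact absurd this Circle.exp_pi_ne_one
  have h1 := h (Circle.exp (2 * Real.pi / k)) (by
    rw [Circle.coe_exp, ← Complex.exp_int_mul, Complex.exp_eq_one_iff]
    refine ⟨1, ?_⟩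
    have : (k : ℂ) ≠ 0 := by exact_mod_cast hk
    push_cast
    field_simp)
  obtain ⟨m, hm⟩ := Circle.exp_eq_one.1 h1
  have hk' : (k : ℝ) ≠ 0 := by exact_mod_cast hk
  have : (1:ℝ) = m * k := by
    have hp := Real.pi_ne_zero
    field_simp at hm
    linarith
  have : k * m = 1 := by rw [mul_comm]; exact_mod_cast this.symm
  exact Int.isUnit_iff.1 (IsUnit.of_mul_eq_one _ this)


open Module.End in
theorem aux_simdiag {n : ℕ} {ι : Type} (A : ι → Matrix (Fin n) (Fin n) ℂ)
    (hA : ∀ i, (A i).IsHermitian) (hc : ∀ i j, A i * A j = A j * A i) :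
    ∃ g : Matrix.unitaryGroup (Fin n) ℂ, ∃ c : ι → Fin n → ℂ,
      ∀ i, A i * (g : Matrix (Fin n) (Fin n) ℂ) = g * Matrix.diagonal (c i) := by
  classical
  let T : ι → (EuclideanSpace ℂ (Fin n) →ₗ[ℂ] EuclideanSpace ℂ (Fin n)) :=
    fun i => Matrix.toEuclideanLin (A i)
  have hT : ∀ i, (T i).IsSymmetric := fun i => Matrix.isSymmetric_toEuclideanLin_iff.2 (hA i)
  have hC : Pairwise (Function.onFun Commute T) := by
    intro i j _
    apply LinearMap.ext
    intro v
    simp [T, Module.End.mul_apply, Matrix.toLpLin_apply, hc]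
  let V : (ι → ℂ) → Submodule ℂ (EuclideanSpace ℂ (Fin n)) :=
    fun α => ⨅ j, eigenspace (T j) (α j)
  have hI : DirectSum.IsInternal V := LinearMap.IsSymmetric.directSum_isInternal_of_pairwise_commute hT hC
  have hO : OrthogonalFamily ℂ (fun α => V α) fun α => (V α).subtypeₗᵢ :=
    LinearMap.IsSymmetric.orthogonalFamily_iInf_eigenspaces hT
  have hI' := DirectSum.isInternal_ne_bot_iff.2 hI
  have fin : Finite {α // V α ≠ ⊥} :=
    (WellFoundedGT.finite_ne_bot_of_iSupIndep hI.submodule_iSupIndep).to_subtype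
  have := Fintype.ofFinite {α // V α ≠ ⊥}
  have hO' : OrthogonalFamily ℂ (fun α : {α // V α ≠ ⊥} => V α.1) fun α => (V α.1).subtypeₗᵢ :=
    hO.comp Subtype.val_injective
  have hn : Module.finrank ℂ (EuclideanSpace ℂ (Fin n)) = n := by simp
  let b := hI'.subordinateOrthonormalBasis hn hO'
  have hb : ∀ a i, T i (b a) = ((hI'.subordinateOrthonormalBasisIndex hn a hO').1 i) • b a := by
    intro a i
    have := hI'.subordinateOrthonormalBasis_subordinate hn a hO'
    rw [← Module.End.mem_eigenspace_iff]
    exact (Submodule.mem_iInf _).1 this i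
  let g0 : Matrix (Fin n) (Fin n) ℂ := Matrix.of fun i j => b j i
  have hg0 : g0 ∈ Matrix.unitaryGroup (Fin n) ℂ := by
    rw [Matrix.mem_unitaryGroup_iff']
    ext i j
    have := orthonormal_iff_ite.1 b.orthonormal i j
    rw [Matrix.mul_apply, Matrix.one_apply, ← this]
    simp [PiLp.inner_apply, g0, Matrix.star_apply, mul_comm]
  refine ⟨⟨g0, hg0⟩, fun i a => (hI'.subordinateOrthonormalBasisIndex hn a hO').1 i, fun i => ?_⟩
  ext k a
  have := congrArg (fun v => v.ofLp k) (hb a i)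
  simp [T, Matrix.toLpLin_apply, Matrix.mulVec, dotProduct] at this
  simp [Matrix.mul_apply, Matrix.diagonal_apply, g0, this, mul_comm]

theorem aux_unitary_diag {n : ℕ} (x : Matrix.unitaryGroup (Fin n) ℂ) :
    ∃ g : Matrix.unitaryGroup (Fin n) ℂ, ∃ c : Fin n → ℂ,
      (x : Matrix (Fin n) (Fin n) ℂ) * (g : Matrix (Fin n) (Fin n) ℂ) = g * Matrix.diagonal c := by
  set X : Matrix (Fin n) (Fin n) ℂ := x.1
  have h1 : X * star X = 1 := Matrix.mem_unitaryGroup_iff.1 x.2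
  have h2 : star X * X = 1 := Matrix.mem_unitaryGroup_iff'.1 x.2
  obtain ⟨g, c, hg⟩ := aux_simdiag (fun b : Bool => if b then X + star X else Complex.I • (X - star X))
    (by
      intro b
      cases b
      · change star _ = _
        simp only [Bool.false_eq_true, if_false, star_smul, star_sub, star_star, RCLike.star_def, Complex.conj_I]
        module
      · change star _ = _
        simp [add_comm])
    (by
      intro i j
      cases i <;> cases j <;> simp [mul_add, add_mul, mul_sub, sub_mul, h1, h2] <;> module)
  refine ⟨g, fun i => (1/2 : ℂ) * (c true i - Complex.I * c false i), ?_⟩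
  have ht := hg true
  have hf := hg false
  simp only [if_true, Bool.false_eq_true, if_false] at ht hf
  have e : X = (1/2:ℂ) • ((X + star X) - Complex.I • (Complex.I • (X - star X))) := by
    rw [smul_smul, Complex.I_mul_I]; module
  have e2 : Matrix.diagonal (fun i => (1/2 : ℂ) * (c true i - Complex.I * c false i)) =
     (1/2:ℂ) • (Matrix.diagonal (c true) - Complex.I • Matrix.diagonal (c false)) := by
    ext i j; by_cases h : i = j <;> simp [Matrix.diagonal_apply, h]
  rw [e2]
  conv_lhs => rw [e]
  rw [Matrix.smul_mul, Matrix.sub_mul, ht, Matrix.smul_mul, hf]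
  simp [Matrix.mul_sub]


abbrev MC (n : ℕ) := Matrix (Fin n) (Fin n) ℂ

abbrev UG (n : ℕ) := Matrix.unitaryGroup (Fin n) ℂ

open scoped Matrix.Norms.L2Operator in
theorem aux_span_unitary (n : ℕ) :
    Submodule.span ℂ (Matrix.unitaryGroup (Fin n) ℂ : Set (Matrix (Fin n) (Fin n) ℂ)) = ⊤ :=
  CStarAlgebra.span_unitary (Matrix (Fin n) (Fin n) ℂ)

theorem aux_comm_all {n : ℕ} (M : Matrix (Fin n) (Fin n) ℂ)
    (h : ∀ x : Matrix.unitaryGroup (Fin n) ℂ, M * (x : Matrix (Fin n) (Fin n) ℂ) = x * M) :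
    ∃ c : ℂ, M = c • 1 := by
  have h' : ∀ N : Matrix (Fin n) (Fin n) ℂ, M * N = N * M := by
    intro N
    have hN : N ∈ Submodule.span ℂ (Matrix.unitaryGroup (Fin n) ℂ : Set (Matrix (Fin n) (Fin n) ℂ)) := by
      rw [aux_span_unitary]; trivial
    induction hN using Submodule.span_induction with
    | mem x hx => exact h ⟨x, hx⟩
    | zero => simp
    | add x y _ _ hx hy => rw [mul_add, add_mul, hx, hy]
    | smul a x _ hx => rw [Matrix.mul_smul, Matrix.smul_mul, hx]
  have : M ∈ Set.range (Matrix.scalar (Fin n)) := by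
    rw [Matrix.mem_range_scalar_iff_commute_single']
    intro i j
    exact (h' _).symm
  obtain ⟨c, rfl⟩ := this
  exact ⟨c, by rw [Matrix.scalar_apply, Matrix.smul_one_eq_diagonal]⟩

theorem aux_trace_inner {n : ℕ} (hn : 0 < n)
    (β : Matrix.unitaryGroup (Fin n) ℂ ≃* Matrix.unitaryGroup (Fin n) ℂ)
    (htr : ∀ x, Matrix.trace (β x : Matrix (Fin n) (Fin n) ℂ) =
      Matrix.trace (x : Matrix (Fin n) (Fin n) ℂ)) :
    ∃ g : Matrix.unitaryGroup (Fin n) ℂ, ∀ x, β x = g * x * g⁻¹ := by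
  classical
  have : Nonempty (Fin n) := ⟨⟨0, hn⟩⟩
  let Φ : MonoidAlgebra ℂ (UG n) →ₐ[ℂ] (MC n) := MonoidAlgebra.lift ℂ (MC n) (UG n) (Submonoid.subtype _)
  let Ψ : MonoidAlgebra ℂ (UG n) →ₐ[ℂ] (MC n) :=
    MonoidAlgebra.lift ℂ (MC n) (UG n) ((Submonoid.subtype _).comp β.toMonoidHom)
  have hΦ1 : ∀ x : (UG n), Φ (MonoidAlgebra.of ℂ (UG n) x) = (x : (MC n)) := fun x => by simp [Φ]
  have hΨ1 : ∀ x : (UG n), Ψ (MonoidAlgebra.of ℂ (UG n) x) = (β x : (MC n)) := fun x => by simp [Ψ]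
  have surj : ∀ (F : MonoidAlgebra ℂ (UG n) →ₐ[ℂ] (MC n)), (∀ x : (UG n), ∃ a, F a = (x : (MC n))) →
      Function.Surjective F := by
    intro F hF
    rw [← AlgHom.coe_toLinearMap, ← LinearMap.range_eq_top, eq_top_iff, ← aux_span_unitary,
      Submodule.span_le]
    intro x hx
    obtain ⟨a, ha⟩ := hF ⟨x, hx⟩
    exact ⟨a, ha⟩
  have hΦ : Function.Surjective Φ := surj Φ fun x => ⟨_, hΦ1 x⟩
  have hΨ : Function.Surjective Ψ := surj Ψ fun x => ⟨_, by
    rw [hΨ1 (β.symm x), β.apply_symm_apply]⟩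
  have tr : ∀ a, Matrix.trace (Ψ a) = Matrix.trace (Φ a) := by
    intro a
    have : (Matrix.traceLinearMap (Fin n) ℂ ℂ) ∘ₗ Ψ.toLinearMap =
      (Matrix.traceLinearMap (Fin n) ℂ ℂ) ∘ₗ Φ.toLinearMap := by
      apply MonoidAlgebra.lhom_ext'
      intro x
      apply LinearMap.ext_ring
      have := htr x
      rw [← hΨ1, ← hΦ1] at this
      exact this
    exact LinearMap.congr_fun this a
  have ker : ∀ a, Φ a = 0 ↔ Ψ a = 0 := by
    intro a
    constructor
    · intro h
      apply Matrix.ext_iff_trace_mul_right.2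
      intro m
      obtain ⟨b, rfl⟩ := hΨ m
      rw [← map_mul, tr, map_mul, h]
      simp
    · intro h
      apply Matrix.ext_iff_trace_mul_right.2
      intro m
      obtain ⟨b, rfl⟩ := hΦ m
      rw [← map_mul, ← tr, map_mul, h]
      simp
  let s : (MC n) → MonoidAlgebra ℂ (UG n) := Function.surjInv hΦ
  have hs : ∀ m, Φ (s m) = m := Function.surjInv_eq hΦ
  have key : ∀ a b, Φ a = Φ b → Ψ a = Ψ b := by
    intro a b h
    rw [← sub_eq_zero, ← map_sub, ← ker, map_sub, h, sub_self]
  let L : (MC n) →ₐ[ℂ] (MC n) := AlgHom.ofLinearMap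
    { toFun := fun m => Ψ (s m)
      map_add' := fun x y => by rw [← map_add]; apply key; simp [hs]
      map_smul' := fun c x => by
        rw [RingHom.id_apply, ← map_smul]; apply key; simp [hs] }
    (by
      change Ψ (s 1) = 1
      rw [← map_one Ψ]; apply key; simp [hs])
    (by
      intro x y
      change Ψ (s _) = Ψ (s _) * Ψ (s _)
      rw [← map_mul]; apply key; simp [hs])
  have hL : ∀ x : (UG n), L (x : (MC n)) = (β x : (MC n)) := by
    intro x
    change Ψ (s _) = _
    rw [← hΨ1]
    apply key
    rw [hs, hΦ1]
  have Lbij : Function.Bijective L := by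
    constructor
    · rw [injective_iff_map_eq_zero]
      intro m hm
      change Ψ (s m) = 0 at hm
      rwa [← ker, hs] at hm
    · intro m
      obtain ⟨a, rfl⟩ := hΨ m
      refine ⟨Φ a, ?_⟩
      change Ψ (s _) = _
      apply key
      rw [hs]
  let e : (MC n) ≃ₐ[ℂ] (MC n) := AlgEquiv.ofBijective L Lbij
  let f : Module.End ℂ (Fin n → ℂ) ≃ₐ[ℂ] Module.End ℂ (Fin n → ℂ) :=
    (LinearMap.toMatrixAlgEquiv' ).trans (e.trans Matrix.toLinAlgEquiv')
  obtain ⟨T, hT⟩ := f.eq_linearEquivConjAlgEquiv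
  let t : (MC n) := LinearMap.toMatrixAlgEquiv' (T : Module.End ℂ (Fin n → ℂ))
  let t' : (MC n) := LinearMap.toMatrixAlgEquiv' (T.symm : Module.End ℂ (Fin n → ℂ))
  have htt' : t' * t = 1 := by
    simp only [t, t']
    rw [← map_mul, ← map_one (LinearMap.toMatrixAlgEquiv' (R := ℂ) (n := Fin n))]
    congr 1
    ext v; simp
  have htx : ∀ x : (UG n), (β x : (MC n)) * t = t * x := by
    intro x
    have h1 := AlgEquiv.congr_fun hT (Matrix.toLinAlgEquiv' (x : (MC n)))
    have h2 : (β x : (MC n)) = LinearMap.toMatrixAlgEquiv' (f (Matrix.toLinAlgEquiv' (x : (MC n)))) := by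
      simp [f, e, hL]
    have h3 : LinearMap.toMatrixAlgEquiv' (T.conjAlgEquiv ℂ (Matrix.toLinAlgEquiv' (x : (MC n)))) = t * x * t' := by
      have : T.conjAlgEquiv ℂ (Matrix.toLinAlgEquiv' (x : (MC n))) =
        (T : Module.End ℂ (Fin n → ℂ)) * Matrix.toLinAlgEquiv' (x : (MC n)) * (T.symm : Module.End ℂ (Fin n → ℂ)) := by
        ext v; simp [LinearEquiv.conjAlgEquiv_apply]
      rw [this, map_mul, map_mul]
      simp [t, t']
    rw [h2, h1, h3, mul_assoc, htt', mul_one]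
  have uni : ∀ x : (UG n), star (x : (MC n)) * (x : (MC n)) = 1 := fun x => Matrix.mem_unitaryGroup_iff'.1 x.2
  have uni' : ∀ x : (UG n), (x : (MC n)) * star (x : (MC n)) = 1 := fun x => Matrix.mem_unitaryGroup_iff.1 x.2
  obtain ⟨c, hc⟩ := aux_comm_all (star t * t) (by
    intro x
    have h1 := htx x
    have h2 : star t * star (β x : (MC n)) = star (x : (MC n)) * star t := by
      rw [← star_mul, h1, star_mul]
    have h3 : star (x : (MC n)) * (star t * t) * x = star t * t := by
      calc star (x : (MC n)) * (star t * t) * x = (star (x : (MC n)) * star t) * (t * x) := by noncomm_ring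
        _ = star t * (star (β x : (MC n)) * β x) * t := by rw [← h1, ← h2]; noncomm_ring
        _ = _ := by rw [uni]; noncomm_ring
    calc star t * t * x = (x * star (x:(MC n))) * (star t * t) * x := by rw [uni', one_mul]
      _ = x * (star (x : (MC n)) * (star t * t) * x) := by noncomm_ring
      _ = _ := by rw [h3])
  let i0 : Fin n := ⟨0, hn⟩
  have hcre : c = ((∑ k, ‖t k i0‖ ^ 2 : ℝ) : ℂ) := by
    have := congrFun (congrFun hc i0) i0
    rw [Matrix.mul_apply] at this
    simp [Matrix.star_apply] at this
    rw [← this]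
    push_cast
    refine Finset.sum_congr rfl fun k _ => ?_
    rw [← Complex.conj_mul']
  set r : ℝ := ∑ k, ‖t k i0‖ ^ 2 with hr
  have hr0 : 0 ≤ r := Finset.sum_nonneg fun k _ => by positivity
  have hrne : r ≠ 0 := by
    intro h
    rw [hcre, h] at hc
    open scoped ComplexOrder in
    have : t = 0 := by
      have : star t * t = 0 := by rw [hc]; simp
      exact Matrix.conjTranspose_mul_self_eq_zero.1 this
    rw [this, mul_zero] at htt'
    exact zero_ne_one htt'
  have hsq : ((Real.sqrt r : ℝ) : ℂ) * (Real.sqrt r : ℝ) = r := by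
    exact_mod_cast Real.mul_self_sqrt hr0
  have hsne : ((Real.sqrt r : ℝ) : ℂ) ≠ 0 := by
    intro h; rw [h, zero_mul] at hsq; exact hrne (by exact_mod_cast hsq.symm)
  let g0 : (MC n) := ((Real.sqrt r : ℝ) : ℂ)⁻¹ • t
  have hg0 : g0 ∈ Matrix.unitaryGroup (Fin n) ℂ := by
    rw [Matrix.mem_unitaryGroup_iff']
    simp only [g0, star_smul, Matrix.smul_mul, Matrix.mul_smul, smul_smul]
    rw [hc, hcre, ← hsq, smul_smul]
    simp only [star_inv₀, RCLike.star_def, Complex.conj_ofReal]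
    field_simp
    simp
  refine ⟨⟨g0, hg0⟩, fun x => ?_⟩
  rw [eq_mul_inv_iff_mul_eq]
  apply Subtype.ext
  change (β x : (MC n)) * g0 = g0 * x
  simp only [g0, Matrix.mul_smul, Matrix.smul_mul, htx]


theorem aux_circle_hom (f : Circle → Circle) (hf : Continuous f)
    (hm : ∀ z w, f (z * w) = f z * f w) : ∃ k : ℤ, ∀ z : Circle, f z = z ^ k := by
  have h1 : f 1 = 1 := by
    have := hm 1 1
    rw [mul_one] at this
    exact (mul_eq_left.1 this.symm)
  obtain ⟨k, hk⟩ := aux_circle_char (fun z => (f z : ℂ)) (by fun_prop)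
    (by simp [h1]) (fun z w => by simp [hm])
  exact ⟨k, fun z => Circle.ext (by simpa using hk z)⟩

theorem aux_zpow_inj' (k : ℤ) (h : ∀ z : Circle, z ^ k = 1 → z = 1) : k = 1 ∨ k = -1 :=
  aux_zpow_inj k fun z hz => h z (Circle.ext (by simpa using hz))

theorem aux_zpow_unique (k l : ℤ) (h : ∀ z : Circle, z ^ k = z ^ l) : k = l := by
  by_contra hne
  have hK : k - l ≠ 0 := sub_ne_zero.2 hne
  have h1 : (Circle.exp (Real.pi / ((k - l : ℤ) : ℝ))) ^ (k - l) = 1 := by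
    rw [zpow_sub, h]; simp
  have hK' : ((k - l : ℤ) : ℝ) ≠ 0 := by exact_mod_cast hK
  rw [← Circle.exp_zsmul, zsmul_eq_mul, mul_div_cancel₀ _ hK'] at h1
  exact Circle.exp_pi_ne_one h1

theorem aux_prod_zpow {ι : Type} (s : Finset ι) (f : ι → ℤ) (z : Circle) :
    ∏ i ∈ s, z ^ f i = z ^ ∑ i ∈ s, f i := by
  classical
  induction s using Finset.induction_on with
  | empty => simp
  | insert a s ha ih => rw [Finset.prod_insert ha, Finset.sum_insert ha, ih, zpow_add]

theorem aux_sq_one (z : Circle) (h : z * z = 1) : z = 1 ∨ z = Circle.exp Real.pi := by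
  have : (z:ℂ)*z=1 := by rw [← Circle.coe_mul, h, Circle.coe_one]
  rcases mul_self_eq_one_iff.1 this with h | h
  · left; exact Circle.ext (by simpa using h)
  · right; exact Circle.ext (by simpa using h)

/-- diagonal unitary matrices -/
noncomputable def dg {n : ℕ} (c : Fin n → Circle) : UG n :=
  ⟨Matrix.diagonal fun i => (c i : ℂ), by
    rw [Matrix.mem_unitaryGroup_iff]
    ext i j
    by_cases h : i = j
    · subst h; simp [Matrix.star_eq_conjTranspose, Matrix.diagonal_conjTranspose, Complex.mul_conj]
    · simp [Matrix.star_eq_conjTranspose, Matrix.diagonal_conjTranspose, h]⟩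

theorem dg_coe {n : ℕ} (c : Fin n → Circle) :
    (dg c : MC n) = Matrix.diagonal fun i => (c i : ℂ) := rfl

theorem dg_mul {n : ℕ} (c d : Fin n → Circle) : dg c * dg d = dg (c * d) := by
  apply Subtype.ext
  change (dg c : MC n) * (dg d : MC n) = _
  simp [dg_coe]

theorem dg_one {n : ℕ} : dg (1 : Fin n → Circle) = 1 := by
  apply Subtype.ext
  simp [dg_coe]

theorem dg_inj {n : ℕ} {c d : Fin n → Circle} (h : dg c = dg d) : c = d := by
  funext i
  have := congrFun (congrFun (congrArg Subtype.val h) i) i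
  simp only [dg_coe, Matrix.diagonal_apply_eq] at this
  exact Circle.ext this

theorem dg_inv {n : ℕ} (c : Fin n → Circle) : (dg c)⁻¹ = dg c⁻¹ := by
  rw [inv_eq_iff_mul_eq_one, dg_mul, mul_inv_cancel, dg_one]

/-- `dg` as a homomorphism -/
noncomputable def dgHom (n : ℕ) : (Fin n → Circle) →* UG n where
  toFun := dg
  map_one' := dg_one
  map_mul' c d := (dg_mul c d).symm

theorem dg_continuous {n : ℕ} : Continuous (dg (n := n)) := by
  apply Continuous.subtype_mk
  apply Continuous.matrix_diagonal
  fun_prop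

theorem dg_trace {n : ℕ} (c : Fin n → Circle) : Matrix.trace (dg c : MC n) = ∑ i, (c i : ℂ) := by
  simp [dg_coe, Matrix.trace]

theorem dg_det {n : ℕ} (c : Fin n → Circle) : Matrix.det (dg c : MC n) = ((∏ i, c i : Circle) : ℂ) := by
  rw [dg_coe, Matrix.det_diagonal]
  exact (map_prod Circle.coeHom c Finset.univ).symm

theorem eq_dg {n : ℕ} (x : UG n) (c : Fin n → ℂ) (h : (x : MC n) = Matrix.diagonal c) :
    ∃ c' : Fin n → Circle, x = dg c' := by
  have hx : (x : MC n) * star (x : MC n) = 1 := Matrix.mem_unitaryGroup_iff.1 x.2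
  have : ∀ i, ‖c i‖ = 1 := by
    intro i
    have := congrFun (congrFun hx i) i
    rw [h] at this
    simp [Matrix.star_eq_conjTranspose, Matrix.diagonal_conjTranspose, Complex.mul_conj,
      Complex.normSq_eq_norm_sq] at this
    rcases this with h2 | h2
    · exact_mod_cast h2
    · have h3 : ‖c i‖ = -1 := by exact_mod_cast h2
      linarith [norm_nonneg (c i)]
  refine ⟨fun i => ⟨c i, mem_sphere_zero_iff_norm.2 (this i)⟩, Subtype.ext ?_⟩
  rw [h]
  rfl

theorem conj_trace {n : ℕ} {x y p : UG n} (h : p * x = y * p) :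
    Matrix.trace (x : MC n) = Matrix.trace (y : MC n) := by
  have hy : y = p * x * p⁻¹ := by rw [h]; group
  rw [hy]
  change _ = Matrix.trace ((p : MC n) * (x : MC n) * ((p⁻¹ : UG n) : MC n))
  rw [Matrix.trace_mul_cycle]
  have : ((p⁻¹ : UG n) : MC n) * (p : MC n) = 1 := congrArg Subtype.val (inv_mul_cancel p)
  rw [this, one_mul]

theorem conj_det {n : ℕ} {x y p : UG n} (h : p * x = y * p) :
    Matrix.det (x : MC n) = Matrix.det (y : MC n) := by
  have h1 : (p : MC n) * x = y * p := congrArg Subtype.val h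
  have h2 := congrArg Matrix.det h1
  have h3 : ((p⁻¹ : UG n) : MC n) * (p : MC n) = 1 := congrArg Subtype.val (inv_mul_cancel p)
  have h4 := congrArg Matrix.det h3
  rw [Matrix.det_mul, Matrix.det_mul] at h2
  rw [Matrix.det_mul, Matrix.det_one] at h4
  have h5 : Matrix.det (p : MC n) ≠ 0 := right_ne_zero_of_mul_eq_one h4
  apply mul_left_cancel₀ h5
  rw [h2, mul_comm]

theorem exists_perm {n : ℕ} (σ : Equiv.Perm (Fin n)) :
    ∃ p : UG n, ∀ c : Fin n → Circle, p * dg c = dg (c ∘ σ) * p := by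
  let P : MC n := Matrix.of fun i j => if σ i = j then 1 else 0
  have hP : P ∈ Matrix.unitaryGroup (Fin n) ℂ := by
    rw [Matrix.mem_unitaryGroup_iff]
    ext i j
    simp [P, Matrix.mul_apply, Matrix.star_apply, Matrix.one_apply, eq_comm]
  refine ⟨⟨P, hP⟩, fun c => Subtype.ext ?_⟩
  change P * (dg c : MC n) = (dg (c ∘ σ) : MC n) * P
  ext i j
  rw [dg_coe, dg_coe, Matrix.mul_diagonal, Matrix.diagonal_mul]
  by_cases h : σ i = j
  · subst h; simp [P]
  · simp [P, h]

theorem smul_dg {n : ℕ} (i : Fin n) (z : Circle) : (dg (Pi.mulSingle i z) : MC n) =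
    ((1 + z) / 2 : ℂ) • (1 : MC n) + ((1 - z) / 2 : ℂ) • (dg (Pi.mulSingle i (Circle.exp Real.pi)) : MC n) := by
  ext a b
  by_cases h : a = b
  · subst h
    by_cases h2 : a = i
    · subst h2; simp [dg_coe]; ring
    · simp [dg_coe, h2]; ring
  · simp [dg_coe, h]

theorem comm_dg {n : ℕ} {y : UG n} {i : Fin n} (z : Circle)
    (h : y * dg (Pi.mulSingle i (Circle.exp Real.pi)) = dg (Pi.mulSingle i (Circle.exp Real.pi)) * y) :
    y * dg (Pi.mulSingle i z) = dg (Pi.mulSingle i z) * y := by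
  have h1 : (y : MC n) * dg (Pi.mulSingle i (Circle.exp Real.pi)) =
    dg (Pi.mulSingle i (Circle.exp Real.pi)) * (y : MC n) := congrArg Subtype.val h
  apply Subtype.ext
  change (y : MC n) * (dg (Pi.mulSingle i z) : MC n) = (dg (Pi.mulSingle i z) : MC n) * (y : MC n)
  rw [smul_dg, mul_add, add_mul, Matrix.mul_smul, Matrix.mul_smul, h1]
  simp

theorem diag_of_comm {n : ℕ} {y : UG n}
    (h : ∀ i, y * dg (Pi.mulSingle i (Circle.exp Real.pi)) = dg (Pi.mulSingle i (Circle.exp Real.pi)) * y) :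
    ∃ c : Fin n → Circle, y = dg c := by
  apply eq_dg y (fun i => (y : MC n) i i)
  ext a b
  by_cases hab : a = b
  · subst hab; simp
  · rw [Matrix.diagonal_apply_ne _ hab]
    have h1 : (y : MC n) * dg (Pi.mulSingle b (Circle.exp Real.pi)) =
      dg (Pi.mulSingle b (Circle.exp Real.pi)) * (y : MC n) := congrArg Subtype.val (h b)
    have h2 := congrFun (congrFun h1 a) b
    rw [dg_coe, Matrix.mul_diagonal, Matrix.diagonal_mul] at h2
    simp [hab] at h2
    linear_combination (-1/2 : ℂ) * h2

/-- sign vector -/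
noncomputable def sgn {n : ℕ} (B : Finset (Fin n)) : Fin n → Circle :=
  fun j => if j ∈ B then Circle.exp Real.pi else 1

theorem sgn_inj {n : ℕ} {A B : Finset (Fin n)} (h : sgn A = sgn B) : A = B := by
  ext j
  have := congrFun h j
  have hp := Circle.exp_pi_ne_one
  by_cases h1 : j ∈ A <;> by_cases h2 : j ∈ B <;> simp_all [sgn]

theorem sgn_single {n : ℕ} (i : Fin n) : Pi.mulSingle i (Circle.exp Real.pi) = sgn {i} := by
  funext j
  by_cases h : j = i
  · subst h; simp [sgn]
  · simp [sgn, h]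

theorem eq_sgn {n : ℕ} (c : Fin n → Circle) (h : dg c * dg c = 1) : ∃ B, c = sgn B := by
  classical
  refine ⟨Finset.univ.filter fun j => c j = Circle.exp Real.pi, ?_⟩
  rw [dg_mul, ← dg_one] at h
  have h' := dg_inj h
  funext j
  have := aux_sq_one (c j) (congrFun h' j)
  by_cases hj : c j = Circle.exp Real.pi
  · simp [sgn, hj]
  · simp [sgn, hj]; tauto

theorem sgn_trace {n : ℕ} (B : Finset (Fin n)) :
    Matrix.trace (dg (sgn B) : MC n) = n - 2 * B.card := by
  classical
  have : ∀ j, ((sgn B j : Circle) : ℂ) = 1 - 2 * (if j ∈ B then 1 else 0) := by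
    intro j
    by_cases h : j ∈ B
    · simp [sgn, h]; norm_num
    · simp [sgn, h]
  rw [dg_trace]
  simp only [this, Finset.sum_sub_distrib, ← Finset.mul_sum]
  simp

theorem sgn_card {n : ℕ} {A B : Finset (Fin n)}
    (h : Matrix.trace (dg (sgn A) : MC n) = Matrix.trace (dg (sgn B) : MC n)) :
    A.card = B.card := by
  rw [sgn_trace, sgn_trace] at h
  have : (A.card : ℂ) = B.card := by linear_combination (-1/2 : ℂ) * h
  exact_mod_cast this

theorem sgn_conj {n : ℕ} {A B : Finset (Fin n)} (h : A.card = B.card) :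
    ∃ p : UG n, p * dg (sgn A) = dg (sgn B) * p := by
  let e : {x // x ∈ B} ≃ {x // x ∈ A} := Finset.equivOfCardEq h.symm
  let σ : Equiv.Perm (Fin n) := e.extendSubtype
  obtain ⟨p, hp⟩ := exists_perm σ
  refine ⟨p, ?_⟩
  rw [hp]
  congr 2
  funext j
  by_cases hj : j ∈ B
  · have := e.extendSubtype_mem j hj
    simp [sgn, hj, σ, this]
  · have := e.extendSubtype_not_mem j hj
    simp [sgn, hj, σ, this]

theorem aux_choose (m j : ℕ) (h1 : 1 ≤ j) (h2 : j < m) : m ≤ m.choose j := by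
  induction m generalizing j with
  | zero => omega
  | succ m ih =>
    obtain ⟨j, rfl⟩ : ∃ i, j = i + 1 := ⟨j - 1, by omega⟩
    rw [Nat.choose_succ_succ']
    rcases Nat.eq_or_lt_of_le (Nat.lt_succ_iff.1 h2) with h | h
    · subst h
      simp
    · have := ih (j + 1) (by omega) h
      have : 0 < m.choose j := Nat.choose_pos (by omega)
      omega

theorem aux_choose' (n k : ℕ) (hn : 3 ≤ n) (h1 : 1 ≤ k) (h2 : k < n) (h : n.choose k ≤ n) :
    k = 1 ∨ k + 1 = n := by
  by_contra! hc
  obtain ⟨m, rfl⟩ : ∃ m, n = m + 1 := ⟨n - 1, by omega⟩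
  obtain ⟨j, rfl⟩ : ∃ j, k = j + 1 := ⟨k - 1, by omega⟩
  rw [Nat.choose_succ_succ'] at h
  have := aux_choose m j (by omega) (by omega)
  have := aux_choose m (j + 1) (by omega) (by omega)
  omega


/-- `-1` in the `i`-th diagonal entry -/
noncomputable abbrev rr {n : ℕ} (i : Fin n) (z : Circle) : UG n := dg (Pi.mulSingle i z)

theorem dg_sgn_inj {n : ℕ} {A B : Finset (Fin n)} (h : dg (sgn A) = dg (sgn B)) : A = B :=
  sgn_inj (dg_inj h)

theorem rr_sgn {n : ℕ} (i : Fin n) : rr i (Circle.exp Real.pi) = dg (sgn {i}) := by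
  rw [rr, sgn_single]

theorem sgn_sq {n : ℕ} (B : Finset (Fin n)) : dg (sgn B) * dg (sgn B) = 1 := by
  rw [dg_mul, ← dg_one]
  congr 1
  funext j
  have : Circle.exp Real.pi * Circle.exp Real.pi = 1 := Circle.ext (by simp)
  by_cases hj : j ∈ B <;> simp [sgn, hj, this]

theorem sgn_empty {n : ℕ} : dg (sgn (∅ : Finset (Fin n))) = 1 := by
  rw [← dg_one]
  congr 1

theorem core_one {n : ℕ} (hn : 3 ≤ n) (β : UG n ≃* UG n) (C : Fin n → Fin n → Circle)
    (hC : ∀ i, β (rr i (Circle.exp Real.pi)) = dg (C i)) :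
    ∃ π : Fin n → Fin n, Function.Injective π ∧
      ∀ i j k, j ≠ π i → k ≠ π i → C i j = C i k := by
  classical
  have h1 : ∀ i, ∃ A, C i = sgn A := by
    intro i
    apply eq_sgn
    rw [← hC, ← map_mul, rr_sgn, sgn_sq, map_one]
  choose A hA using h1
  have hβ : ∀ i, β (dg (sgn {i})) = dg (sgn (A i)) := by
    intro i; rw [← rr_sgn, hC, hA]
  have hAinj : Function.Injective A := by
    intro i j h
    have h2 := hβ i
    rw [h, ← hβ j] at h2
    have h3 := dg_sgn_inj (β.injective h2)
    simpa using h3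
  have hcard : ∀ i j, (A i).card = (A j).card := by
    intro i j
    obtain ⟨p, hp⟩ := sgn_conj (A := {i}) (B := {j}) (by simp)
    have := congrArg β hp
    rw [map_mul, map_mul, hβ, hβ] at this
    exact sgn_card (conj_trace this)
  let i0 : Fin n := ⟨0, by omega⟩
  have hsurj : ∀ B : Finset (Fin n), B.card = (A i0).card → ∃ j, A j = B := by
    intro B hB
    obtain ⟨p, hp⟩ := sgn_conj (A := B) (B := A i0) hB
    obtain ⟨c, hc⟩ := diag_of_comm (y := β.symm (dg (sgn B))) (by
      intro i
      apply β.injective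
      rw [map_mul, map_mul, hC i, β.apply_symm_apply, dg_mul, dg_mul, mul_comm])
    obtain ⟨D, hD⟩ := eq_sgn c (by rw [← hc, ← map_mul, sgn_sq, map_one])
    have h2 := congrArg β.symm hp
    rw [← hβ, map_mul, map_mul, β.symm_apply_apply, hc, hD] at h2
    have h3 := sgn_card (conj_trace h2)
    rw [Finset.card_singleton, Finset.card_eq_one] at h3
    obtain ⟨j, hj⟩ := h3
    refine ⟨j, ?_⟩
    apply dg_sgn_inj
    rw [← hβ, ← hj, ← hD, ← hc, β.apply_symm_apply]
  have hk1 : 1 ≤ (A i0).card := by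
    by_contra h
    have h0 : A i0 = ∅ := by rw [← Finset.card_eq_zero]; omega
    have h2 := hβ i0
    rw [h0, sgn_empty, ← map_one β] at h2
    have h3 := β.injective h2
    rw [← sgn_empty] at h3
    simpa using dg_sgn_inj h3
  have hk2 : (A i0).card < n := by
    by_contra h
    have h4 : ∀ i, A i = Finset.univ := by
      intro i
      rw [← Finset.card_eq_iff_eq_univ, hcard i i0, Fintype.card_fin]
      have := Finset.card_le_univ (A i0)
      rw [Fintype.card_fin] at this
      omega
    have h5 := hAinj ((h4 i0).trans (h4 ⟨1, by omega⟩).symm)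
    simp [i0] at h5
  have hch : n.choose (A i0).card ≤ n := by
    have h1 : Finset.powersetCard (A i0).card (Finset.univ : Finset (Fin n)) ⊆
        Finset.univ.image A := by
      intro B hB
      obtain ⟨j, hj⟩ := hsurj B (Finset.mem_powersetCard.1 hB).2
      exact Finset.mem_image.2 ⟨j, Finset.mem_univ _, hj⟩
    have h2 := Finset.card_le_card h1
    have h3 := Finset.card_image_le (s := (Finset.univ : Finset (Fin n))) (f := A)
    simp at h2 h3
    omega
  rcases aux_choose' n _ hn hk1 hk2 hch with hk | hk
  · have h1 : ∀ i, ∃ j, A i = {j} := fun i => Finset.card_eq_one.1 (by rw [hcard i i0, hk])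
    choose π hπ using h1
    refine ⟨π, fun i j h => hAinj (by rw [hπ, hπ, h]), fun i j k hj hk => ?_⟩
    rw [hA, hπ]
    simp [sgn, hj, hk]
  · have h1 : ∀ i, ∃ j, (A i)ᶜ = {j} := fun i => Finset.card_eq_one.1 (by
      rw [Finset.card_compl, hcard i i0, Fintype.card_fin]; omega)
    choose π hπ using h1
    refine ⟨π, fun i j h => hAinj (compl_injective (by rw [hπ, hπ, h])), fun i j k hj hk => ?_⟩
    have h2 : ∀ l, l ≠ π i → l ∈ A i := by
      intro l hl
      by_contra h
      rw [← Finset.mem_compl, hπ, Finset.mem_singleton] at h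
      exact hl h
    rw [hA]
    simp [sgn, h2 j hj, h2 k hk]

theorem core_two {n : ℕ} (hn : 3 ≤ n) (β : UG n ≃* UG n) (hβ : Continuous β)
    (C : Fin n → Fin n → Circle)
    (hC : ∀ i, β (rr i (Circle.exp Real.pi)) = dg (C i))
    (π : Fin n → Fin n)
    (hπ : ∀ i j k, j ≠ π i → k ≠ π i → C i j = C i k) :
    ∃ a b : Fin n → ℤ, ∀ i z,
      β (rr i z) = dg (fun j => z ^ (if j = π i then a i else b i)) := by
  classical
  have hcomm : ∀ (i : Fin n) (z : Circle) (y : UG n), y * dg (C i) = dg (C i) * y →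
      y * β (rr i z) = β (rr i z) * y := by
    intro i z y hy
    have h1 : β.symm y * rr i (Circle.exp Real.pi) = rr i (Circle.exp Real.pi) * β.symm y := by
      apply β.injective
      rw [map_mul, map_mul, hC, β.apply_symm_apply, hy]
    have h2 := congrArg β (comm_dg z h1)
    rwa [map_mul, map_mul, β.apply_symm_apply] at h2
  have h1 : ∀ i z, ∃ c : Fin n → Circle, β (rr i z) = dg c := by
    intro i z
    apply diag_of_comm
    intro j
    exact (hcomm i z _ (by rw [dg_mul, dg_mul, mul_comm])).symm
  choose e he using h1
  have hmul : ∀ i z w, e i (z * w) = e i z * e i w := by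
    intro i z w
    apply dg_inj
    rw [← dg_mul, ← he, ← he, ← he, ← map_mul, dg_mul]
    rw [rr, Pi.mulSingle_mul]
  have hcont : ∀ i j, Continuous fun z => e i z j := by
    intro i j
    apply continuous_induced_rng.2
    have h2 : (fun z => ((e i z j : Circle) : ℂ)) = fun z => (β (rr i z) : MC n) j j := by
      funext z
      rw [he, dg_coe, Matrix.diagonal_apply_eq]
    change Continuous (fun z => ((e i z j : Circle) : ℂ))
    rw [h2]
    have h4 : Continuous (fun z : Circle => (Pi.mulSingle i z : Fin n → Circle)) := by
      apply continuous_pi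
      intro l
      by_cases hl : l = i
      · subst hl; simp only [Pi.mulSingle_eq_same]; exact continuous_id
      · simp only [Pi.mulSingle_eq_of_ne hl]; exact continuous_const
    have h3 : Continuous fun z => (β (rr i z) : MC n) :=
      continuous_subtype_val.comp (hβ.comp (dg_continuous.comp h4))
    exact h3.matrix_elem j j
  have hex : ∀ i j, ∃ k : ℤ, ∀ z, e i z j = z ^ k := fun i j =>
    aux_circle_hom _ (hcont i j) fun z w => by rw [hmul]; rfl
  choose K hK using hex
  have hone : ∀ i, ∃ j, j ≠ π i := by
    intro i
    have : Nontrivial (Fin n) := Fin.nontrivial_iff_two_le.2 (by omega)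
    exact exists_ne _
  choose o ho using hone
  refine ⟨fun i => K i (π i), fun i => K i (o i), fun i z => ?_⟩
  rw [he]
  congr 1
  funext j
  by_cases hj : j = π i
  · simp [hj, hK]
  · simp only [hj, if_false]
    rw [← hK]
    obtain ⟨p, hp⟩ := exists_perm (Equiv.swap j (o i))
    have h5 : C i ∘ Equiv.swap j (o i) = C i := by
      funext l
      simp only [Function.comp_apply]
      by_cases hl1 : l = j
      · subst hl1; rw [Equiv.swap_apply_left]; exact hπ i _ _ (ho i) hj
      · by_cases hl2 : l = o i
        · subst hl2; rw [Equiv.swap_apply_right]; exact hπ i _ _ hj (ho i)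
        · rw [Equiv.swap_apply_of_ne_of_ne hl1 hl2]
    have h6 := hcomm i z p (by rw [hp, h5])
    rw [he, hp] at h6
    have h7 := dg_inj (mul_right_cancel h6)
    have h8 := congrFun h7 j
    simp at h8
    exact h8.symm

theorem core_map {n : ℕ} (β : UG n ≃* UG n) (F : Fin n → Fin n → ℤ)
    (h : ∀ i z, β (rr i z) = dg (fun j => z ^ F i j)) (c : Fin n → Circle) :
    β (dg c) = dg (fun j => ∏ i, c i ^ F i j) := by
  classical
  have h1 : ∀ s : Finset (Fin n), β (dg (∏ i ∈ s, Pi.mulSingle i (c i))) =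
      dg (∏ i ∈ s, fun j => c i ^ F i j) := by
    intro s
    induction s using Finset.induction_on with
    | empty => simp [dg_one]
    | insert a s ha ih =>
      rw [Finset.prod_insert ha, Finset.prod_insert ha, ← dg_mul, ← dg_mul, map_mul, ih, ← h]
  have h2 := h1 Finset.univ
  rw [Finset.univ_prod_mulSingle] at h2
  rw [h2]
  congr 1
  funext j
  rw [Finset.prod_apply]

theorem core_three {n : ℕ} (hn : 3 ≤ n) (β : UG n ≃* UG n) (π : Fin n → Fin n)
    (hπ : Function.Injective π) (a b : Fin n → ℤ)
    (h : ∀ i z, β (rr i z) = dg (fun j => z ^ (if j = π i then a i else b i)))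
    (ω : Circle) (hω : ω⁻¹ ≠ ω) (hβω : β (dg fun _ => ω) = dg fun _ => ω) :
    ∀ i, a i = 1 ∧ b i = 0 := by
  classical
  have hm := core_map β _ h
  -- determinant
  have hS : ∀ i, a i + (n - 1) * b i = ∑ j, if j = π i then a i else b i := by
    intro i
    have : ∀ j, (if j = π i then a i else b i) = b i + if j = π i then a i - b i else 0 := by
      intro j; split_ifs <;> ring
    simp only [this, Finset.sum_add_distrib]
    simp
    ring
  have hdet : ∀ i i', a i + (n - 1) * b i = a i' + (n - 1) * b i' := by
    intro i i'
    rw [hS, hS]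
    apply aux_zpow_unique
    intro z
    rw [← aux_prod_zpow, ← aux_prod_zpow]
    obtain ⟨p, hp⟩ := exists_perm (Equiv.swap i i')
    have h1 : (Pi.mulSingle i z : Fin n → Circle) ∘ Equiv.swap i i' = Pi.mulSingle i' z := by
      funext l
      simp only [Function.comp_apply, Pi.mulSingle_apply]
      congr 1
      rw [Equiv.swap_apply_eq_iff, Equiv.swap_apply_left]
    have h2 := congrArg β (hp (Pi.mulSingle i z))
    rw [h1, map_mul, map_mul, h, h] at h2
    have h3 := conj_det h2
    rw [dg_det, dg_det] at h3
    exact Circle.ext h3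
  -- scalars
  have hsc : ∀ z : Circle, β (dg fun _ => z) =
      dg fun j => z ^ ∑ i, (if j = π i then a i else b i) := by
    intro z
    rw [hm]
    simp only [aux_prod_zpow]
  have hcen : ∀ (z : Circle) (y : UG n), y * dg (fun _ => z) = dg (fun _ => z) * y := by
    intro z y
    apply Subtype.ext
    change (y : MC n) * ((dg fun _ => z : UG n) : MC n) = ((dg fun _ => z : UG n) : MC n) * (y : MC n)
    ext i j
    rw [dg_coe, Matrix.mul_diagonal, Matrix.diagonal_mul, mul_comm]
  have hT : ∀ j k, (∑ i, if j = π i then a i else b i) = ∑ i, if k = π i then a i else b i := by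
    intro j k
    apply aux_zpow_unique
    intro z
    obtain ⟨p, hp⟩ := exists_perm (Equiv.swap j k)
    have h1 := congrArg β (hcen z (β.symm p))
    rw [map_mul, map_mul, β.apply_symm_apply, hsc, hp] at h1
    have h2 := congrFun (dg_inj (mul_right_cancel h1)) k
    simpa using h2
  let i0 : Fin n := ⟨0, by omega⟩
  let i1 : Fin n := ⟨1, by omega⟩
  have h01 : i0 ≠ i1 := by simp [i0, i1]
  have hs1 : (∑ i, if i0 = π i then a i else b i) = 1 := by
    have h1 := aux_zpow_inj' (∑ i, if i0 = π i then a i else b i) (by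
      intro z hz
      have h2 : β (dg fun _ => z) = β 1 := by
        rw [hsc, map_one, ← dg_one]
        congr 1
        funext j
        rw [hT j i0, hz]; rfl
      have h3 := β.injective h2
      rw [← dg_one] at h3
      exact congrFun (dg_inj h3) i0)
    rcases h1 with h1 | h1
    · exact h1
    · exfalso
      rw [hsc] at hβω
      have h2 := congrFun (dg_inj hβω) i0
      simp only [h1, zpow_neg, zpow_one] at h2
      exact hω h2
  have hδ : ∀ i, a i - b i = 1 - ∑ l, b l := by
    intro i
    have h1 := hT (π i) i0
    rw [hs1] at h1
    have h2 : ∀ l, (if π i = π l then a l else b l) = b l + if i = l then a l - b l else 0 := by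
      intro l
      by_cases hl : i = l
      · subst hl; simp
      · simp [hl, hπ.ne hl]
    simp only [h2, Finset.sum_add_distrib] at h1
    simp at h1
    linarith
  have hn0 : (n : ℤ) ≠ 0 := by omega
  have hb : ∀ i, b i = b i0 := by
    intro i
    have h1 := hdet i i0
    have h2 := hδ i
    have h3 := hδ i0
    have h4 : (n : ℤ) * b i = n * b i0 := by linear_combination h1 - h2 + h3
    exact mul_left_cancel₀ hn0 h4
  have hsum : ∑ l, b l = n * b i0 := by
    rw [Finset.sum_congr rfl fun l _ => hb l]; simp
  have hδ1 := aux_zpow_inj' (a i0 - b i0) (by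
    intro z hz
    have h2 : β (rr i0 z * rr i1 z⁻¹) = β 1 := by
      rw [map_mul, map_one, h, h, dg_mul, ← dg_one]
      congr 1
      funext j
      have e1 : a i1 = a i0 := by have := hδ i0; have := hδ i1; have := hb i1; linarith
      have e2 : z ^ a i0 = z ^ b i0 := by
        rw [← mul_inv_eq_one, ← zpow_sub]
        exact hz
      simp only [Pi.mul_apply, Pi.one_apply, e1, hb i1, inv_zpow]
      split_ifs <;> simp [e2]
    have h3 := β.injective h2
    rw [dg_mul, ← dg_one] at h3
    have h4 := congrFun (dg_inj h3) i0
    simpa [h01] using h4)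
  have hδ0 := hδ i0
  rw [hsum] at hδ0
  have hb0 : b i0 = 0 := by
    rcases hδ1 with h1 | h1
    · have : (n : ℤ) * b i0 = 0 := by linarith
      exact (mul_eq_zero.1 this).resolve_left hn0
    · exfalso
      have h2 : (n : ℤ) * b i0 = 2 := by linarith
      have h3 : (n : ℤ) ∣ 2 := ⟨_, h2.symm⟩
      have h4 := Int.le_of_dvd (by norm_num) h3
      omega
  intro i
  have h1 := hδ i
  rw [hsum, hb i, hb0] at h1
  exact ⟨by linarith, by rw [hb i, hb0]⟩

theorem core_four {n : ℕ} (hn : 3 ≤ n) (β : UG n ≃* UG n) (hβ : Continuous β)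
    (C : Fin n → Fin n → Circle)
    (hC : ∀ i, β (rr i (Circle.exp Real.pi)) = dg (C i))
    (ω : Circle) (hω : ω⁻¹ ≠ ω) (hβω : β (dg fun _ => ω) = dg fun _ => ω) :
    ∃ g, ∀ x, β x = g * x * g⁻¹ := by
  classical
  obtain ⟨π, hπ, hπC⟩ := core_one hn β C hC
  obtain ⟨a, b, hab⟩ := core_two hn β hβ C hC π hπC
  have h1 := core_three hn β π hπ a b hab ω hω hβω
  have hdiag : ∀ c, Matrix.trace (β (dg c) : MC n) = Matrix.trace (dg c : MC n) := by
    intro c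
    rw [core_map β _ hab, dg_trace, dg_trace]
    have hbij : Function.Bijective π := Finite.injective_iff_bijective.1 hπ
    rw [← (Equiv.ofBijective π hbij).sum_comp]
    apply Finset.sum_congr rfl
    intro i _
    congr 1
    simp only [Equiv.ofBijective_apply]
    rw [Finset.prod_eq_single i]
    · simp [(h1 i).1]; rfl
    · intro l _ hl
      simp [hπ.ne hl.symm, (h1 l).2]
    · simp
  apply aux_trace_inner (by omega)
  intro x
  obtain ⟨g, c, hg⟩ := aux_unitary_diag x
  obtain ⟨c', hc'⟩ := eq_dg (g⁻¹ * x * g) c (by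
    change ((g⁻¹ : UG n) : MC n) * (x : MC n) * (g : MC n) = _
    rw [mul_assoc, hg, ← mul_assoc]
    have : ((g⁻¹ : UG n) : MC n) * (g : MC n) = 1 := congrArg Subtype.val (inv_mul_cancel g)
    rw [this, one_mul])
  have h2 : g * dg c' = x * g := by rw [← hc']; group
  rw [← conj_trace h2, ← hdiag]
  have h3 := congrArg β h2
  rw [map_mul, map_mul] at h3
  exact (conj_trace h3).symm

theorem core_final {n : ℕ} (hn : 3 ≤ n) (β : UG n ≃* UG n) (hβ : Continuous β)
    (ω : Circle) (hω : ω⁻¹ ≠ ω) (hβω : β (dg fun _ => ω) = dg fun _ => ω) :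
    ∃ g, ∀ x, β x = g * x * g⁻¹ := by
  classical
  have hherm : ∀ i, (β (rr i (Circle.exp Real.pi)) : MC n).IsHermitian := by
    intro i
    have h1 : β (rr i (Circle.exp Real.pi)) * β (rr i (Circle.exp Real.pi)) = 1 := by
      rw [← map_mul, rr_sgn, sgn_sq, map_one]
    have h2 := inv_eq_of_mul_eq_one_left h1
    have h3 := congrArg Subtype.val h2
    exact h3
  obtain ⟨g, c, hg⟩ := aux_simdiag (fun i => (β (rr i (Circle.exp Real.pi)) : MC n)) hherm (by
    intro i j
    have : β (rr i (Circle.exp Real.pi)) * β (rr j (Circle.exp Real.pi)) =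
        β (rr j (Circle.exp Real.pi)) * β (rr i (Circle.exp Real.pi)) := by
      rw [← map_mul, ← map_mul, dg_mul, dg_mul, mul_comm]
    exact congrArg Subtype.val this)
  let β' : UG n ≃* UG n := β.trans (MulAut.conj g⁻¹)
  have hβ' : ∀ x, β' x = g⁻¹ * β x * g := by
    intro x; simp [β']
  have hcont : Continuous β' := by
    have : (β' : UG n → UG n) = fun x => g⁻¹ * β x * g := funext hβ'
    rw [this]
    exact (continuous_const.mul hβ).mul continuous_const
  have hC : ∀ i, ∃ C, β' (rr i (Circle.exp Real.pi)) = dg C := by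
    intro i
    apply eq_dg _ (c i)
    rw [hβ']
    change ((g⁻¹ : UG n) : MC n) * (β (rr i (Circle.exp Real.pi)) : MC n) * (g : MC n) = _
    rw [mul_assoc]
    have h2 := hg i
    rw [h2, ← mul_assoc]
    have : ((g⁻¹ : UG n) : MC n) * (g : MC n) = 1 := congrArg Subtype.val (inv_mul_cancel g)
    rw [this, one_mul]
  choose C hC using hC
  obtain ⟨q, hq⟩ := core_four hn β' hcont C hC ω hω (by
    rw [hβ', hβω]
    have : dg (fun _ => ω) * g = g * dg (fun _ => ω) := by
      apply Subtype.ext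
      change ((dg fun _ => ω : UG n) : MC n) * (g : MC n) = (g : MC n) * ((dg fun _ => ω : UG n) : MC n)
      ext i j
      rw [dg_coe, Matrix.mul_diagonal, Matrix.diagonal_mul, mul_comm]
    rw [mul_assoc, this]; group)
  refine ⟨g * q, fun x => ?_⟩
  have h1 := hq x
  rw [hβ'] at h1
  have : β x = g * (g⁻¹ * β x * g) * g⁻¹ := by group
  rw [this, h1]; group


/-- The Frobenius-type group of pairs `(x, i)` with `x` modulo `p` and `i` modulo `3`. -/
@[ext] structure Aff (p u : ℕ) where
  /-- translation part -/
  x : ZMod p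
  /-- linear part -/
  i : ZMod 3

namespace Aff

variable {p u : ℕ}

/-- the multiplier -/
def w (p u : ℕ) (i : ZMod 3) : ZMod p := (u : ZMod p) ^ i.val

theorem pow_val_add {M : Type*} [Monoid M] {a : M} (h : a ^ 3 = 1) (i j : ZMod 3) :
    a ^ (i + j).val = a ^ i.val * a ^ j.val := by
  rw [ZMod.val_add, ← pow_eq_pow_mod _ h, pow_add]

theorem w_add [hu : Fact ((u : ZMod p) ^ 3 = 1)] (i j : ZMod 3) :
    w p u (i + j) = w p u i * w p u j := pow_val_add hu.out i j

theorem w_zero : w p u 0 = 1 := by simp [w]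

instance : Mul (Aff p u) := ⟨fun g h => ⟨g.x + w p u g.i * h.x, g.i + h.i⟩⟩
instance : One (Aff p u) := ⟨⟨0, 0⟩⟩
instance : Inv (Aff p u) := ⟨fun g => ⟨-(w p u (-g.i) * g.x), -g.i⟩⟩

theorem mul_x (g h : Aff p u) : (g * h).x = g.x + w p u g.i * h.x := rfl
theorem mul_i (g h : Aff p u) : (g * h).i = g.i + h.i := rfl
theorem one_x : (1 : Aff p u).x = 0 := rfl
theorem one_i : (1 : Aff p u).i = 0 := rfl
theorem inv_x (g : Aff p u) : (g⁻¹).x = -(w p u (-g.i) * g.x) := rfl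
theorem inv_i (g : Aff p u) : (g⁻¹).i = -g.i := rfl

instance [Fact ((u : ZMod p) ^ 3 = 1)] : Group (Aff p u) :=
  Group.ofLeftAxioms
    (fun a b c => by
      ext
      · simp only [mul_x, mul_i, w_add]; ring
      · simp only [mul_i]; ring)
    (fun a => by
      ext
      · simp [mul_x, one_x, one_i, w_zero]
      · simp [mul_i, one_i])
    (fun a => by
      ext
      · simp only [mul_x, inv_x, inv_i, one_x]; ring
      · simp [mul_i, inv_i, one_i])

theorem pow_i [Fact ((u : ZMod p) ^ 3 = 1)] (g : Aff p u) (k : ℕ) : (g ^ k).i = k * g.i := by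
  induction k with
  | zero => simp [one_i]
  | succ k ih => rw [pow_succ, mul_i, ih]; push_cast; ring

theorem pow_x [Fact ((u : ZMod p) ^ 3 = 1)] (g : Aff p u) (hg : g.i = 0) (k : ℕ) :
    (g ^ k).x = k * g.x := by
  induction k with
  | zero => simp [one_x]
  | succ k ih => rw [pow_succ, mul_x, ih, pow_i, hg, mul_zero, w_zero]; push_cast; ring

instance [NeZero p] : Finite (Aff p u) :=
  Finite.of_injective (fun g => (g.x, g.i)) fun a b h => by
    simp only [Prod.mk.injEq] at h
    exact Aff.ext h.1 h.2

end Aff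

instance : Fact (((2 : ℕ) : ZMod 7) ^ 3 = 1) := ⟨by decide⟩
instance : Fact (((3 : ℕ) : ZMod 13) ^ 3 = 1) := ⟨by decide⟩

abbrev P7 := Aff 7 2
abbrev P13 := Aff 13 3

theorem zmod3_seven : ∀ i : ZMod 3, ((7 : ℕ) : ZMod 3) * i = 0 → i = 0 := by decide
theorem zmod3_thirteen : ∀ i : ZMod 3, ((13 : ℕ) : ZMod 3) * i = 0 → i = 0 := by decide

theorem P13_seven (r : P13) (h : r ^ 7 = 1) : r = 1 := by
  have hi : r.i = 0 := zmod3_seven _ (by rw [← Aff.pow_i, h]; rfl)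
  have hx : ((7 : ℕ) : ZMod 13) * r.x = 0 := by rw [← Aff.pow_x r hi, h]; rfl
  have key : ∀ y : ZMod 13, ((7 : ℕ) : ZMod 13) * y = 0 → y = 0 := by decide
  exact Aff.ext (key _ hx) hi

theorem P7_thirteen (r : P7) (h : r ^ 13 = 1) : r = 1 := by
  have hi : r.i = 0 := zmod3_thirteen _ (by rw [← Aff.pow_i, h]; rfl)
  have hx : ((13 : ℕ) : ZMod 7) * r.x = 0 := by rw [← Aff.pow_x r hi, h]; rfl
  have key : ∀ y : ZMod 7, ((13 : ℕ) : ZMod 7) * y = 0 → y = 0 := by decide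
  exact Aff.ext (key _ hx) hi

theorem P7_nonzero (r : P7) (h : r ^ 7 = 1) (hr : r ≠ 1) : r.i = 0 ∧ r.x ≠ 0 := by
  have hi : r.i = 0 := zmod3_seven _ (by rw [← Aff.pow_i, h]; rfl)
  exact ⟨hi, fun hx => hr (Aff.ext hx hi)⟩

theorem P13_nonzero (r : P13) (h : r ^ 13 = 1) (hr : r ≠ 1) : r.i = 0 ∧ r.x ≠ 0 := by
  have hi : r.i = 0 := zmod3_thirteen _ (by rw [← Aff.pow_i, h]; rfl)
  exact ⟨hi, fun hx => hr (Aff.ext hx hi)⟩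

theorem P7_sq (r s : P7) (h : r ^ 7 = 1) (hr : r ≠ 1) (hs : s * r = r ^ 2 * s) : s.i = 1 := by
  obtain ⟨hi, hx⟩ := P7_nonzero r h hr
  have h1 := congrArg Aff.x hs
  rw [Aff.mul_x, Aff.mul_x, Aff.pow_x r hi, Aff.pow_i, hi, mul_zero, Aff.w_zero] at h1
  have h2 : Aff.w 7 2 s.i * r.x = ((2 : ℕ) : ZMod 7) * r.x := by linear_combination h1
  have key : ∀ (i : ZMod 3) (y : ZMod 7), y ≠ 0 →
      Aff.w 7 2 i * y = ((2 : ℕ) : ZMod 7) * y → i = 1 := by decide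
  exact key _ _ hx h2

theorem P7_comm (r s : P7) (h : r ^ 7 = 1) (hr : r ≠ 1) (hs : s * r = r * s) : s.i = 0 := by
  obtain ⟨hi, hx⟩ := P7_nonzero r h hr
  have h1 := congrArg Aff.x hs
  rw [Aff.mul_x, Aff.mul_x, hi, Aff.w_zero] at h1
  have h2 : Aff.w 7 2 s.i * r.x = r.x := by linear_combination h1
  have key : ∀ (i : ZMod 3) (y : ZMod 7), y ≠ 0 → Aff.w 7 2 i * y = y → i = 0 := by decide
  exact key _ _ hx h2

theorem P13_cube (r s : P13) (h : r ^ 13 = 1) (hr : r ≠ 1) (hs : s * r = r ^ 3 * s) :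
    s.i = 1 := by
  obtain ⟨hi, hx⟩ := P13_nonzero r h hr
  have h1 := congrArg Aff.x hs
  rw [Aff.mul_x, Aff.mul_x, Aff.pow_x r hi, Aff.pow_i, hi, mul_zero, Aff.w_zero] at h1
  have h2 : Aff.w 13 3 s.i * r.x = ((3 : ℕ) : ZMod 13) * r.x := by linear_combination h1
  have key : ∀ (i : ZMod 3) (y : ZMod 13), y ≠ 0 →
      Aff.w 13 3 i * y = ((3 : ℕ) : ZMod 13) * y → i = 1 := by decide
  exact key _ _ hx h2

theorem P13_comm (r s : P13) (h : r ^ 13 = 1) (hr : r ≠ 1) (hs : s * r = r * s) : s.i = 0 := by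
  obtain ⟨hi, hx⟩ := P13_nonzero r h hr
  have h1 := congrArg Aff.x hs
  rw [Aff.mul_x, Aff.mul_x, hi, Aff.w_zero] at h1
  have h2 : Aff.w 13 3 s.i * r.x = r.x := by linear_combination h1
  have key : ∀ (i : ZMod 3) (y : ZMod 13), y ≠ 0 → Aff.w 13 3 i * y = y → i = 0 := by decide
  exact key _ _ hx h2

/-- the finite group -/
abbrev Gam := P7 × P13

/-- element of order 7 -/
def ga : Gam := (⟨1, 0⟩, 1)
/-- element of order 13 -/
def gb : Gam := (1, ⟨1, 0⟩)
/-- first element of order 3 -/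
def gs : Gam := (⟨0, 1⟩, 1)
/-- second element of order 3 -/
def gt : Gam := (1, ⟨0, 1⟩)

theorem ga_pow : ga ^ 7 = 1 := by
  apply Prod.ext
  · change (⟨1, 0⟩ : P7) ^ 7 = 1
    apply Aff.ext
    · rw [Aff.pow_x _ rfl, Aff.one_x]; decide
    · rw [Aff.pow_i, Aff.one_i]; decide
  · change (1 : P13) ^ 7 = 1
    simp

theorem gb_pow : gb ^ 13 = 1 := by
  apply Prod.ext
  · change (1 : P7) ^ 13 = 1
    simp
  · change (⟨1, 0⟩ : P13) ^ 13 = 1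
    apply Aff.ext
    · rw [Aff.pow_x _ rfl, Aff.one_x]; decide
    · rw [Aff.pow_i, Aff.one_i]; decide

theorem ga_ne : ga ≠ 1 := by
  intro h
  have h1 : (1 : ZMod 7) = 0 := congrArg (fun g : Gam => g.1.x) h
  exact absurd h1 (by decide)

theorem gb_ne : gb ≠ 1 := by
  intro h
  have h1 : (1 : ZMod 13) = 0 := congrArg (fun g : Gam => g.2.x) h
  exact absurd h1 (by decide)

theorem gs_ga : gs * ga = ga ^ 2 * gs := by
  rw [sq]
  apply Prod.ext
  · apply Aff.ext <;> decide
  · apply Aff.ext <;> decide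

theorem gt_gb : gt * gb = gb ^ 3 * gt := by
  rw [pow_succ, sq]
  apply Prod.ext
  · apply Aff.ext <;> decide
  · apply Aff.ext <;> decide

theorem gs_gb : gs * gb = gb * gs := by
  apply Prod.ext
  · apply Aff.ext <;> decide
  · apply Aff.ext <;> decide

theorem gt_ga : gt * ga = ga * gt := by
  apply Prod.ext
  · apply Aff.ext <;> decide
  · apply Aff.ext <;> decide

theorem gs_gt : gs * gt = gt * gs := by
  apply Prod.ext
  · apply Aff.ext <;> decide
  · apply Aff.ext <;> decide

theorem gam_end (σ : Gam →* Gam) (ha : σ ga ≠ 1) (hb : σ gb ≠ 1) :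
    ((σ gs).1.i = 1 ∧ (σ gs).2.i = 0) ∧ ((σ gt).1.i = 0 ∧ (σ gt).2.i = 1) := by
  have a7 : (σ ga) ^ 7 = 1 := by rw [← map_pow, ga_pow, map_one]
  have b13 : (σ gb) ^ 13 = 1 := by rw [← map_pow, gb_pow, map_one]
  have a71 : (σ ga).1 ^ 7 = 1 := congrArg Prod.fst a7
  have a72 : (σ ga).2 ^ 7 = 1 := congrArg Prod.snd a7
  have b1 : (σ gb).1 ^ 13 = 1 := congrArg Prod.fst b13
  have b2 : (σ gb).2 ^ 13 = 1 := congrArg Prod.snd b13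
  have ha1 : (σ ga).1 ≠ 1 := fun h => ha (Prod.ext h (P13_seven _ a72))
  have hb1 : (σ gb).2 ≠ 1 := fun h => hb (Prod.ext (P7_thirteen _ b1) h)
  have r1 : σ gs * σ ga = (σ ga) ^ 2 * σ gs := by
    rw [← map_pow, ← map_mul, ← map_mul, gs_ga]
  have r2 : σ gt * σ gb = (σ gb) ^ 3 * σ gt := by
    rw [← map_pow, ← map_mul, ← map_mul, gt_gb]
  have r3 : σ gs * σ gb = σ gb * σ gs := by rw [← map_mul, ← map_mul, gs_gb]
  have r4 : σ gt * σ ga = σ ga * σ gt := by rw [← map_mul, ← map_mul, gt_ga]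
  exact ⟨⟨P7_sq _ _ a71 ha1 (congrArg Prod.fst r1), P13_comm _ _ b2 hb1 (congrArg Prod.snd r3)⟩,
    ⟨P7_comm _ _ a71 ha1 (congrArg Prod.fst r4), P13_cube _ _ b2 hb1 (congrArg Prod.snd r2)⟩⟩

section action

variable {N : Type} [Group N]

/-- the action of the finite group through a pair of elements commuting up to the centre -/
def actHom (X Z k : N) (hX : X ^ 3 = 1) (hZ : Z ^ 3 = 1) (hk : ∀ y, k * y = y * k)
    (hXZ : Z * X = k * (X * Z)) : Gam →* MulAut N where
  toFun γ := MulAut.conj (X ^ γ.1.i.val * Z ^ γ.2.i.val)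
  map_one' := by
    change MulAut.conj (X ^ (0 : ZMod 3).val * Z ^ (0 : ZMod 3).val) = 1
    simp
  map_mul' γ δ := by
    have hA : (MulAut.conj X) ^ 3 = 1 := by rw [← map_pow, hX, map_one]
    have hB : (MulAut.conj Z) ^ 3 = 1 := by rw [← map_pow, hZ, map_one]
    have hk1 : MulAut.conj k = 1 := by
      ext y
      rw [MulAut.conj_apply, hk]
      simp
    have hAB : Commute (MulAut.conj X) (MulAut.conj Z) := by
      change MulAut.conj X * MulAut.conj Z = MulAut.conj Z * MulAut.conj X
      rw [← map_mul, ← map_mul, hXZ, map_mul _ k, hk1, one_mul]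
    change MulAut.conj (X ^ (γ.1.i + δ.1.i).val * Z ^ (γ.2.i + δ.2.i).val) = _
    simp only [map_mul, map_pow]
    rw [Aff.pow_val_add hA, Aff.pow_val_add hB, mul_assoc, mul_assoc,
      ← mul_assoc (MulAut.conj X ^ _) (MulAut.conj Z ^ _) (MulAut.conj Z ^ _),
      ← mul_assoc (MulAut.conj Z ^ _) (MulAut.conj X ^ _) (MulAut.conj Z ^ _),
      (hAB.pow_pow _ _).eq]

theorem key_lemma (X Z k : N) (hX : X ^ 3 = 1) (hZ : Z ^ 3 = 1) (hk : ∀ y, k * y = y * k)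
    (hXZ : Z * X = k * (X * Z))
    (ψ : (N ⋊[actHom X Z k hX hZ hk hXZ] Gam) ≃* (N ⋊[actHom X Z k hX hZ hk hXZ] Gam))
    (f : N → N) (hf : Function.Surjective f)
    (hψ : ∀ x, ψ (SemidirectProduct.inl x) = SemidirectProduct.inl (f x)) : f k = k := by
  have hact : ∀ γ : Gam, ∀ y, actHom X Z k hX hZ hk hXZ γ y =
      (X ^ γ.1.i.val * Z ^ γ.2.i.val) * y * (X ^ γ.1.i.val * Z ^ γ.2.i.val)⁻¹ :=
    fun γ y => rfl
  have hact1 : ∀ γ : Gam, γ.1.i = 1 ∧ γ.2.i = 0 → ∀ y,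
      actHom X Z k hX hZ hk hXZ γ y = X * y * X⁻¹ := by
    intro γ hγ y
    have h1 : (1 : ZMod 3).val = 1 := rfl
    rw [hact, hγ.1, hγ.2, h1]
    simp
  have hact2 : ∀ γ : Gam, γ.1.i = 0 ∧ γ.2.i = 1 → ∀ y,
      actHom X Z k hX hZ hk hXZ γ y = Z * y * Z⁻¹ := by
    intro γ hγ y
    have h1 : (1 : ZMod 3).val = 1 := rfl
    rw [hact, hγ.1, hγ.2, h1]
    simp
  generalize actHom X Z k hX hZ hk hXZ = φ at ψ hψ hact1 hact2
  let σ : Gam →* Gam :=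
    (SemidirectProduct.rightHom.comp ψ.toMonoidHom).comp SemidirectProduct.inr
  have hσ : ∀ γ, σ γ = (ψ (SemidirectProduct.inr γ)).right := fun γ => rfl
  have hne : ∀ γ : Gam, γ ≠ 1 → σ γ ≠ 1 := by
    intro γ hγ h
    apply hγ
    rw [hσ] at h
    obtain ⟨x, hx⟩ := hf (ψ (SemidirectProduct.inr γ)).left
    have h1 : ψ (SemidirectProduct.inr γ) = ψ (SemidirectProduct.inl x) := by
      rw [hψ, hx]
      exact SemidirectProduct.ext (by simp) (by simp [h])
    have h2 := congrArg SemidirectProduct.right (ψ.injective h1)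
    simpa using h2
  obtain ⟨hs, ht⟩ := gam_end σ (hne _ ga_ne) (hne _ gb_ne)
  let S : N ⋊[φ] Gam := ⟨X⁻¹, gs⟩
  let T : N ⋊[φ] Gam := ⟨Z⁻¹, gt⟩
  have hS : ∀ x, S * SemidirectProduct.inl x = SemidirectProduct.inl x * S := by
    intro x
    refine SemidirectProduct.ext ?_ ?_
    · simp only [SemidirectProduct.mul_left, SemidirectProduct.left_inl,
        SemidirectProduct.right_inl, map_one, MulAut.one_apply, S]
      rw [hact1 gs ⟨rfl, rfl⟩]
      group
    · simp [S]
  have hT : ∀ x, T * SemidirectProduct.inl x = SemidirectProduct.inl x * T := by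
    intro x
    refine SemidirectProduct.ext ?_ ?_
    · simp only [SemidirectProduct.mul_left, SemidirectProduct.left_inl,
        SemidirectProduct.right_inl, map_one, MulAut.one_apply, T]
      rw [hact2 gt ⟨rfl, rfl⟩]
      group
    · simp [T]
  have hright : ∀ (m : N) (γ : Gam), (ψ ⟨m, γ⟩).right = σ γ := by
    intro m γ
    rw [SemidirectProduct.mk_eq_inl_mul_inr, map_mul, hψ, SemidirectProduct.mul_right,
      SemidirectProduct.right_inl, one_mul, hσ]
  have hST : S * T = SemidirectProduct.inl k * (T * S) := by
    refine SemidirectProduct.ext ?_ ?_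
    · simp only [SemidirectProduct.mul_left, SemidirectProduct.left_inl,
        SemidirectProduct.right_inl, map_one, MulAut.one_apply, S, T]
      rw [hact1 gs ⟨rfl, rfl⟩, hact2 gt ⟨rfl, rfl⟩]
      have h1 : X⁻¹ * (X * Z⁻¹ * X⁻¹) = (X * Z)⁻¹ := by group
      have h2 : Z⁻¹ * (Z * X⁻¹ * Z⁻¹) = (Z * X)⁻¹ := by group
      rw [h1, h2, hXZ, hk]
      group
    · simp [S, T, gs_gt]
  have hcS : ∀ y, ψ S * SemidirectProduct.inl y = SemidirectProduct.inl y * ψ S := by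
    intro y
    obtain ⟨x, rfl⟩ := hf y
    rw [← hψ, ← map_mul, hS, map_mul]
  have hcT : ∀ y, ψ T * SemidirectProduct.inl y = SemidirectProduct.inl y * ψ T := by
    intro y
    obtain ⟨x, rfl⟩ := hf y
    rw [← hψ, ← map_mul, hT, map_mul]
  have hSr : (ψ S).right = σ gs := hright _ _
  have hTr : (ψ T).right = σ gt := hright _ _
  have hSc : ∀ y, ((ψ S).left * X) * y = y * ((ψ S).left * X) := by
    intro y
    have h1 := congrArg SemidirectProduct.left (hcS y)
    simp only [SemidirectProduct.mul_left, SemidirectProduct.left_inl,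
        SemidirectProduct.right_inl, map_one, MulAut.one_apply, hSr] at h1
    rw [hact1 _ hs] at h1
    rw [← mul_assoc y, ← h1]
    group
  have hTc : ∀ y, ((ψ T).left * Z) * y = y * ((ψ T).left * Z) := by
    intro y
    have h1 := congrArg SemidirectProduct.left (hcT y)
    simp only [SemidirectProduct.mul_left, SemidirectProduct.left_inl,
        SemidirectProduct.right_inl, map_one, MulAut.one_apply, hTr] at h1
    rw [hact2 _ ht] at h1
    rw [← mul_assoc y, ← h1]
    group
  have h1 := congrArg (fun g => (ψ g).left) hST
  simp only [map_mul, hψ, SemidirectProduct.mul_left, SemidirectProduct.left_inl,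
    SemidirectProduct.right_inl, map_one, MulAut.one_apply, hSr, hTr] at h1
  rw [hact1 _ hs, hact2 _ ht] at h1
  obtain ⟨c, hc⟩ : ∃ c, c = (ψ S).left * X := ⟨_, rfl⟩
  obtain ⟨d, hd⟩ : ∃ d, d = (ψ T).left * Z := ⟨_, rfl⟩
  rw [← hc] at hSc
  rw [← hd] at hTc
  have hc' : (ψ S).left = c * X⁻¹ := by rw [hc]; group
  have hd' : (ψ T).left = d * Z⁻¹ := by rw [hd]; group
  rw [hc', hd'] at h1
  have h2 : c * X⁻¹ * (X * (d * Z⁻¹) * X⁻¹) = c * d * (X * Z)⁻¹ := by group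
  have h3 : d * Z⁻¹ * (Z * (c * X⁻¹) * Z⁻¹) = c * d * (Z * X)⁻¹ := by
    rw [hSc d]; group
  rw [h2, h3, hXZ, mul_inv_rev k, ← mul_assoc (c * d)] at h1
  generalize c * d * (X * Z)⁻¹ = q at h1
  have h4 : f k * q = k * q := by
    rw [hk]
    calc f k * q = f k * (q * k⁻¹) * k := by group
      _ = q * k := by rw [← h1]
  exact mul_right_cancel h4

end action

theorem exists_omega : ∃ ω : Circle, ω ^ 3 = 1 ∧ ω⁻¹ ≠ ω := by
  by_contra! h
  have := aux_zpow_inj' 3 (by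
    intro z hz
    have hz3 : z ^ 3 = 1 := by exact_mod_cast hz
    have h1 := h z hz3
    have h2 : z * z = 1 := by nth_rewrite 1 [← h1]; simp
    rw [pow_succ, sq, h2, one_mul] at hz3
    exact hz3)
  omega

theorem dg_const_comm {n : ℕ} (z : Circle) (y : UG n) :
    dg (fun _ => z) * y = y * dg (fun _ => z) := by
  apply Subtype.ext
  change ((dg fun _ => z : UG n) : MC n) * (y : MC n) = (y : MC n) * ((dg fun _ => z : UG n) : MC n)
  ext i j
  rw [dg_coe, Matrix.mul_diagonal, Matrix.diagonal_mul, mul_comm]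

/-- the unitary of a permutation -/
noncomputable def permU {n : ℕ} (σ : Equiv.Perm (Fin n)) : UG n :=
  ⟨σ.permMatrix ℂ, by
    rw [Matrix.mem_unitaryGroup_iff, Matrix.star_eq_conjTranspose, Matrix.conjTranspose_permMatrix,
      ← Matrix.permMatrix_mul]
    simp⟩

theorem permU_mul {n : ℕ} (σ τ : Equiv.Perm (Fin n)) : permU σ * permU τ = permU (τ * σ) :=
  Subtype.ext (Matrix.permMatrix_mul (R := ℂ) τ σ).symm

theorem permU_one {n : ℕ} : permU (1 : Equiv.Perm (Fin n)) = 1 :=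
  Subtype.ext (Matrix.permMatrix_one)

theorem permU_dg {n : ℕ} (σ : Equiv.Perm (Fin n)) (c : Fin n → Circle) :
    permU σ * dg c = dg (c ∘ σ) * permU σ := by
  apply Subtype.ext
  change σ.permMatrix ℂ * (dg c : MC n) = (dg (c ∘ σ) : MC n) * σ.permMatrix ℂ
  ext i j
  rw [dg_coe, dg_coe, Matrix.mul_diagonal, Matrix.diagonal_mul]
  by_cases h : σ i = j
  · subst h; simp [Equiv.Perm.permMatrix, Equiv.toPEquiv_apply, PEquiv.toMatrix_apply]
  · simp [Equiv.Perm.permMatrix, Equiv.toPEquiv_apply, PEquiv.toMatrix_apply, h]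

theorem exists_XZ (d : ℕ) (ω : Circle) (hω : ω ^ 3 = 1) :
    ∃ X Z : UG (3 * d), X ^ 3 = 1 ∧ Z ^ 3 = 1 ∧ Z * X = dg (fun _ => ω) * (X * Z) := by
  let e : Fin 3 × Fin d ≃ Fin (3 * d) := finProdFinEquiv
  let ρ : Equiv.Perm (Fin 3) := Equiv.addRight 1
  let σ : Equiv.Perm (Fin (3 * d)) := e.permCongr (Equiv.prodCongr ρ (Equiv.refl _))
  have hσ : ∀ q, σ (e q) = e (q.1 + 1, q.2) := by
    intro q; simp [σ, ρ, Equiv.permCongr_apply]; rfl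
  let c : Fin (3 * d) → Circle := fun l => ω⁻¹ ^ ((e.symm l).1 : ℕ)
  refine ⟨permU σ, dg c, ?_, ?_, ?_⟩
  · rw [pow_succ, sq, permU_mul, permU_mul, ← permU_one]
    congr 1
    ext l
    obtain ⟨q, rfl⟩ := e.surjective l
    simp only [Equiv.Perm.mul_apply, hσ]
    have : q.1 + 1 + 1 + 1 = q.1 := by
      generalize q.1 = a
      revert a; decide
    rw [this]; rfl
  · rw [pow_succ, sq, dg_mul, dg_mul, ← dg_one]
    congr 1
    funext l
    simp only [Pi.mul_apply, Pi.one_apply, c]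
    rw [← mul_pow, ← mul_pow, ← sq, ← pow_succ, inv_pow, hω]
    simp
  · rw [permU_dg, ← mul_assoc, dg_mul]
    congr 2
    funext l
    obtain ⟨q, rfl⟩ := e.surjective l
    simp only [Pi.mul_apply, Function.comp_apply, c, hσ, Equiv.symm_apply_apply]
    have hω' : ω⁻¹ ^ 3 = 1 := by rw [inv_pow, hω, inv_one]
    generalize q.1 = a
    have h3 : ω * (ω⁻¹) ^ 1 = 1 := by simp
    fin_cases a
    · simp
    · simp [sq]
    · have : ω * ω⁻¹ ^ 0 = ω := by simp
      have h5 : ω = ω⁻¹ ^ 2 := by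
        rw [inv_pow, eq_inv_iff_mul_eq_one, ← pow_succ', hω]
      simpa using h5.symm

theorem exists_conj {n : ℕ} (y : UG n) : ∃ x : UG n,
    (x : MC n) = (y : MC n).map (starRingEnd ℂ) := by
  refine ⟨⟨(y : MC n).map (starRingEnd ℂ), ?_⟩, rfl⟩
  have h := Matrix.mem_unitaryGroup_iff.1 y.2
  rw [Matrix.mem_unitaryGroup_iff]
  have h1 : star ((y : MC n).map (starRingEnd ℂ)) = (star (y : MC n)).map (starRingEnd ℂ) := by
    ext i j; simp [Matrix.star_apply]
  rw [h1, ← Matrix.map_mul, h]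
  simp

/-- For every positive integer `d` there are `n` divisible by `d`, a finite
(discrete) group `Γ` and an action of `Γ` on `U(n)` by topological-group automorphisms such
that the complex-conjugation automorphism of `U(n)` does not extend to a topological-group
automorphism of `U(n) ⋊ Γ`; consequently no outer topological-group automorphism of `U(n)`
extends to `U(n) ⋊ Γ`. -/
theorem exists_unitary_semidirect_with_no_outer_lift :
    ∀ d : ℕ, 0 < d →
    ∃ (n : ℕ) (Γ : Type) (_ : Group Γ) (_ : Finite Γ) (_ : TopologicalSpace Γ)
      (_ : DiscreteTopology Γ) (act : Γ →* MulAut (Matrix.unitaryGroup (Fin n) ℂ)),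
      d ∣ n ∧ 0 < n ∧
      (∀ γ : Γ, Continuous ⇑(act γ) ∧ Continuous ⇑(act γ).symm) ∧
      (¬ ∃ ψ : (Matrix.unitaryGroup (Fin n) ℂ ⋊[act] Γ) ≃*
            (Matrix.unitaryGroup (Fin n) ℂ ⋊[act] Γ),
          Continuous ⇑ψ ∧ Continuous ⇑ψ.symm ∧
          ∀ x : Matrix.unitaryGroup (Fin n) ℂ,
            (ψ (SemidirectProduct.inl x)).right = 1 ∧
            ((ψ (SemidirectProduct.inl x)).left : Matrix (Fin n) (Fin n) ℂ) =
              (x : Matrix (Fin n) (Fin n) ℂ).map (starRingEnd ℂ)) ∧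
      (∀ β : Matrix.unitaryGroup (Fin n) ℂ ≃* Matrix.unitaryGroup (Fin n) ℂ,
        Continuous ⇑β → Continuous ⇑β.symm →
        (¬ ∃ g : Matrix.unitaryGroup (Fin n) ℂ, ∀ x, β x = g * x * g⁻¹) →
        ¬ ∃ ψ : (Matrix.unitaryGroup (Fin n) ℂ ⋊[act] Γ) ≃*
              (Matrix.unitaryGroup (Fin n) ℂ ⋊[act] Γ),
            Continuous ⇑ψ ∧ Continuous ⇑ψ.symm ∧
            ∀ x, ψ (SemidirectProduct.inl x) = SemidirectProduct.inl (β x)) := by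
  classical
  intro d hd
  obtain ⟨ω, hω3, hω⟩ := exists_omega
  obtain ⟨X, Z, hX, hZ, hXZ⟩ := exists_XZ d ω hω3
  let _ : TopologicalSpace Gam := ⊥
  refine ⟨3 * d, Gam, inferInstance, inferInstance, ⊥, ⟨rfl⟩,
    actHom X Z (dg fun _ => ω) hX hZ (dg_const_comm ω) hXZ, Dvd.intro_left 3 rfl, by omega,
    ?_, ?_, ?_⟩
  · intro γ
    generalize hg : X ^ γ.1.i.val * Z ^ γ.2.i.val = g
    constructor
    · have h1 : (actHom X Z (dg fun _ => ω) hX hZ (dg_const_comm ω) hXZ γ : UG (3 * d) → UG (3 * d)) =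
          fun y => g * y * g⁻¹ := by
        subst hg; rfl
      rw [h1]
      exact (continuous_const.mul continuous_id).mul continuous_const
    · have h1 : ((actHom X Z (dg fun _ => ω) hX hZ (dg_const_comm ω) hXZ γ).symm :
          UG (3 * d) → UG (3 * d)) = fun y => g⁻¹ * y * g := by
        subst hg; rfl
      rw [h1]
      exact (continuous_const.mul continuous_id).mul continuous_const
  · rintro ⟨ψ, -, -, h⟩
    have h1 := key_lemma X Z (dg fun _ => ω) hX hZ (dg_const_comm ω) hXZ ψ
      (fun x => (ψ (SemidirectProduct.inl x)).left)
      (by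
        intro y
        obtain ⟨x, hx⟩ := exists_conj y
        refine ⟨x, Subtype.ext ?_⟩
        change ((ψ (SemidirectProduct.inl x)).left : MC (3 * d)) = y
        rw [(h x).2, hx]
        ext i j
        simp)
      (fun x => SemidirectProduct.ext (by simp) (by simp [(h x).1]))
    have h2 := (h (dg fun _ => ω)).2
    rw [show (ψ (SemidirectProduct.inl (dg fun _ => ω))).left = dg fun _ => ω from h1] at h2
    let i0 : Fin (3 * d) := ⟨0, by omega⟩
    have h3 := congrFun (congrFun h2 i0) i0
    rw [dg_coe] at h3
    simp only [Matrix.map_apply, Matrix.diagonal_apply_eq] at h3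
    apply hω
    apply Circle.ext
    rw [Circle.coe_inv_eq_conj]
    exact h3.symm
  · rintro β hβ - hout ⟨ψ, -, -, h⟩
    apply hout
    exact core_final (by omega) β hβ ω hω
      (key_lemma X Z (dg fun _ => ω) hX hZ (dg_const_comm ω) hXZ ψ β β.surjective h)
end
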